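/- Fix integers j ≥ 1 and k ≥ 1, and define Λ_j on the positive integers by Λ_j(n) := Σ_{d·δ = n} μ(d)·(log δ)^j, where μ is the Möbius function. Then lim_{X→∞} (1/(X · (log X)^{j+k−1})) · Σ_{n ≤ X} Λ_j(n)·Λ_k(n) = jk/(j+k−1). (Equivalently, (1/X) Σ_{n≤X} Λ_j(n)Λ_k(n) ∼ (jk/(j+k−1)) (log X)^{j+k−1} as X → ∞.) -/

import Mathlib

open Filter

/-- The `j`-th higher-order von Mangoldt function on the positive integers,
`Λ_j(n) = Σ_{d ∣ n} μ(d) (log(n/d))^j`. -/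
noncomputable def vmJ (j : ℕ) (n : ℕ) : ℝ :=
  ∑ d ∈ n.divisors, (ArithmeticFunction.moebius d : ℝ) * (Real.log ((n : ℝ) / (d : ℝ))) ^ j

/-!
Write `f_{j,k} = Λ_j Λ_k`. From `Λ_{j+1} = log · Λ_j + Λ * Λ_j` one gets
`f_{j+1,k} = log · f_{j,k} + ∑_{t < k} C(k,t) (log^{k-t} Λ) * f_{j,t}` up to terms coming from
proper prime powers, which are rare, and from non-coprime factorizations, which are negligible on
average because `Λ_j` vanishes on integers with more than `j` distinct prime factors. Mean values
are measured against the Dirichlet powers of `ζ`: the identities `ζ^{a+1} * ζ^{b+1} = ζ^{a+b+2}` and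
`log · ζ^{a+1} = (a+1) Λ * ζ^{a+1}`, where the last `Λ` acts as one more `ζ` by the prime number
theorem, turn the recursion into one for constants. Induction on `j` shows that `f_{j,k}` has the
mean value of `j k (j+k-2)! ζ^{j+k}`, and `∑_{n ≤ N} ζ^{a+1}(n) ~ N log^a N / a!`.

The prime number theorem itself comes from the continuity of `-ζ'/ζ(s) - 1/(s-1)` on the closed
half-plane `Re s ≥ 1`, by smoothing `ψ(e^u) e^{-u}` with Fejér kernels and the Riemann–Lebesgue
lemma.
-/

section Fejer

open MeasureTheory Set Topology

/-- The Fejér kernel on `ℝ`, scaled so that its mass does not depend on `T`. It concentrates at `0`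
as `T → ∞`, and its Fourier transform is supported on `[-2T, 2T]`. -/
noncomputable def fejerKernel (T v : ℝ) : ℝ := T * Real.sinc (T * v) ^ 2

variable {T : ℝ}

lemma continuous_fejerKernel (T : ℝ) : Continuous (fejerKernel T) := by
  unfold fejerKernel
  fun_prop

lemma fejerKernel_nonneg (hT : 0 ≤ T) (v : ℝ) : 0 ≤ fejerKernel T v := by
  unfold fejerKernel
  positivity

lemma fejerKernel_eq_mul_fejerKernel_one (T v : ℝ) :
    fejerKernel T v = T * fejerKernel 1 (T * v) := by
  simp only [fejerKernel, one_mul]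

lemma sinc_sq_le_two_mul_inv_one_add_sq (v : ℝ) : Real.sinc v ^ 2 ≤ 2 * (1 + v ^ 2)⁻¹ := by
  have sinc_sq_le : Real.sinc v ^ 2 ≤ 1 := (sq_le_one_iff_abs_le_one _).2 (Real.abs_sinc_le_one v)
  have mul_sinc : v * Real.sinc v = Real.sin v := by
    rcases eq_or_ne v 0 with rfl | hv
    · simp
    · rw [Real.sinc_of_ne_zero hv, mul_div_cancel₀ _ hv]
  rw [← div_eq_mul_inv, le_div_iff₀ (by positivity)]
  calc Real.sinc v ^ 2 * (1 + v ^ 2) = Real.sinc v ^ 2 + (v * Real.sinc v) ^ 2 := by ring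
    _ ≤ 1 + 1 := by rw [mul_sinc]; gcongr; exact Real.sin_sq_le_one v
    _ = 2 := by norm_num

lemma integrable_fejerKernel (hT : 0 < T) : Integrable (fejerKernel T) := by
  have integrable_one : Integrable (fejerKernel 1) := by
    refine (integrable_inv_one_add_sq.const_mul 2).mono'
      (continuous_fejerKernel 1).aestronglyMeasurable (Eventually.of_forall fun v => ?_)
    rw [Real.norm_of_nonneg (fejerKernel_nonneg zero_le_one v)]
    simpa only [fejerKernel, one_mul] using sinc_sq_le_two_mul_inv_one_add_sq v
  rw [funext (fejerKernel_eq_mul_fejerKernel_one T)]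
  exact (integrable_one.comp_mul_left' hT.ne').const_mul T

lemma integral_fejerKernel (hT : 0 < T) : ∫ v, fejerKernel T v = ∫ v, fejerKernel 1 v := by
  simp_rw [fejerKernel_eq_mul_fejerKernel_one T]
  rw [integral_const_mul, Measure.integral_comp_mul_left, smul_eq_mul, abs_of_pos (inv_pos.2 hT),
    mul_inv_cancel_left₀ hT.ne']

lemma integral_fejerKernel_one_pos : 0 < ∫ v, fejerKernel 1 v := by
  rw [integral_pos_iff_support_of_nonneg (fejerKernel_nonneg zero_le_one)
    (integrable_fejerKernel one_pos)]
  exact (continuous_fejerKernel 1).isOpen_support.measure_pos volume ⟨0, by simp [fejerKernel]⟩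

lemma tendsto_setIntegral_fejerKernel {δ : ℝ} (hδ : 0 < δ) :
    Tendsto (fun T => ∫ v in Ioc (-δ) δ, fejerKernel T v) atTop (𝓝 (∫ v, fejerKernel 1 v)) := by
  have key : Tendsto (fun T : ℝ => ∫ v in (T * -δ)..(T * δ), fejerKernel 1 v) atTop
      (𝓝 (∫ v, fejerKernel 1 v)) :=
    intervalIntegral_tendsto_integral (integrable_fejerKernel one_pos)
      (tendsto_id.atTop_mul_const_of_neg (neg_neg_of_pos hδ)) (tendsto_id.atTop_mul_const hδ)
  refine key.congr fun T => ?_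
  rw [← intervalIntegral.mul_integral_comp_mul_left, ← intervalIntegral.integral_const_mul,
    intervalIntegral.integral_of_le (by linarith)]
  simp only [← fejerKernel_eq_mul_fejerKernel_one]

lemma integral_one_sub_div_mul_cos (hT : 0 < T) (v : ℝ) :
    ∫ t in 0..(2 * T), (1 - t / (2 * T)) * Real.cos (t * v) = fejerKernel T v := by
  rcases eq_or_ne v 0 with rfl | hv
  · simp only [mul_zero, Real.cos_zero, mul_one, fejerKernel, Real.sinc_zero, one_pow]
    rw [intervalIntegral.integral_sub (by simp) (Continuous.intervalIntegrable (by fun_prop) _ _),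
      intervalIntegral.integral_div, integral_id, intervalIntegral.integral_const, smul_eq_mul]
    field_simp
    ring
  have hasDerivAt_primitive (t : ℝ) : HasDerivAt
      (fun t => (1 - t / (2 * T)) * (Real.sin (t * v) / v) - Real.cos (t * v) / (2 * T * v ^ 2))
      ((1 - t / (2 * T)) * Real.cos (t * v)) t := by
    have linear : HasDerivAt (fun t : ℝ => t * v) v t := by
      simpa using (hasDerivAt_id t).mul_const v
    have weight : HasDerivAt (fun t : ℝ => 1 - t / (2 * T)) (-(1 / (2 * T))) t := by
      simpa using ((hasDerivAt_id t).div_const (2 * T)).const_sub 1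
    convert! (weight.mul (linear.sin.div_const v)).sub
      (linear.cos.div_const (2 * T * v ^ 2)) using 1
    field_simp
    ring
  rw [intervalIntegral.integral_eq_sub_of_hasDerivAt (fun t _ => hasDerivAt_primitive t)
    (Continuous.intervalIntegrable (by fun_prop) _ _), fejerKernel,
    Real.sinc_of_ne_zero (mul_ne_zero hT.ne' hv), mul_assoc 2 T v, Real.cos_two_mul']
  have := Real.sin_sq_add_cos_sq (T * v)
  simp only [zero_mul, Real.sin_zero, Real.cos_zero]
  field_simp
  linear_combination -this

/-- The triangular weight on `[-2T, 2T]` whose Fourier transform is the Fejér kernel. -/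
noncomputable def fejerWeight (T t : ℝ) : ℂ := ((1 - |t| / (2 * T)) / 2 : ℝ)

lemma continuous_fejerWeight (T : ℝ) : Continuous (fejerWeight T) := by
  unfold fejerWeight
  fun_prop

lemma ofReal_fejerKernel (hT : 0 < T) (v : ℝ) :
    (fejerKernel T v : ℂ) =
      ∫ t in Ioc (-(2 * T)) (2 * T), fejerWeight T t * Complex.exp (t * v * Complex.I) := by
  set f : ℝ → ℂ := fun t => fejerWeight T t * Complex.exp (t * v * Complex.I)
  have continuous_f : Continuous f := by
    have := continuous_fejerWeight T
    fun_prop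
  have fold : ∫ t in -(2 * T)..(2 * T), f t = ∫ t in 0..(2 * T), (f (-t) + f t) := by
    have continuous_comp_neg : Continuous fun t => f (-t) := continuous_f.comp continuous_neg
    rw [← intervalIntegral.integral_add_adjacent_intervals (b := 0)
      (continuous_f.intervalIntegrable _ _) (continuous_f.intervalIntegrable _ _),
      intervalIntegral.integral_add (continuous_comp_neg.intervalIntegrable _ _)
      (continuous_f.intervalIntegrable _ _), intervalIntegral.integral_comp_neg, neg_zero]
  rw [← intervalIntegral.integral_of_le (by linarith), fold, ← integral_one_sub_div_mul_cos hT,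
    ← intervalIntegral.integral_ofReal]
  refine intervalIntegral.integral_congr fun t ht => ?_
  rw [uIcc_of_le (by positivity)] at ht
  simp only [f, fejerWeight, abs_neg, abs_of_nonneg ht.1, Complex.ofReal_mul, Complex.ofReal_cos,
    Complex.cos]
  push_cast
  ring_nf

lemma integrable_fejerKernel_sub (hT : 0 < T) (y : ℝ) :
    Integrable (fun u => fejerKernel T (y - u)) :=
  (integrable_fejerKernel hT).comp_sub_left y

lemma tendsto_setIntegral_Ioi_fejerKernel_sub (hT : 0 < T) :
    Tendsto (fun y => ∫ u in Ioi (0 : ℝ), fejerKernel T (y - u)) atTop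
      (𝓝 (∫ v, fejerKernel 1 v)) := by
  have reflect (y : ℝ) :
      ∫ u in Ioi (0 : ℝ), fejerKernel T (y - u) = ∫ v in Iio y, fejerKernel T v := by
    simpa using (Measure.measurePreserving_sub_left volume y).setIntegral_preimage_emb
      (Homeomorph.subLeft y).measurableEmbedding (fejerKernel T) (Iio y)
  simp_rw [reflect, ← integral_fejerKernel hT]
  exact (aecover_Iio tendsto_id).integral_tendsto_of_countably_generated
    (integrable_fejerKernel hT)

end Fejer

section Laplace

open MeasureTheory Set Topology

variable {h : ℝ → ℝ} {C T ε : ℝ} {G : ℂ → ℂ}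

lemma integrableOn_mul_exp_neg_mul (measurable_h : Measurable h) (abs_h_le : ∀ u, |h u| ≤ C)
    (hε : 0 < ε) : IntegrableOn (fun u => h u * Real.exp (-(ε * u))) (Ioi 0) := by
  have integrable_exp : IntegrableOn (fun u : ℝ => Real.exp (-(ε * u))) (Ioi 0) := by
    simpa using integrableOn_exp_mul_Ioi (a := -ε) (by linarith) 0
  exact integrable_exp.bdd_mul measurable_h.aestronglyMeasurable (Eventually.of_forall abs_h_le)

lemma setIntegral_mul_exp_mul_fejerKernel (measurable_h : Measurable h)
    (abs_h_le : ∀ u, |h u| ≤ C)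
    (laplace_h : ∀ z : ℂ, 0 < z.re → ∫ u in Ioi (0 : ℝ), (h u : ℂ) * Complex.exp (-(z * u)) = G z)
    (hε : 0 < ε) (hT : 0 < T) (y : ℝ) :
    ∫ u in Ioi (0 : ℝ), h u * Real.exp (-(ε * u)) * fejerKernel T (y - u) =
      ∫ t in Ioc (-(2 * T)) (2 * T), fejerWeight T t * Complex.exp (t * y * Complex.I) *
        G (ε + t * Complex.I) := by
  let F : ℝ → ℝ → ℂ := fun u t =>
    (h u * Real.exp (-(ε * u)) : ℝ) * fejerWeight T t * Complex.exp (t * (y - u : ℝ) * Complex.I)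
  have integrable_F : Integrable (Function.uncurry F)
      ((volume.restrict (Ioi 0)).prod (volume.restrict (Ioc (-(2 * T)) (2 * T)))) := by
    refine ((integrableOn_mul_exp_neg_mul measurable_h abs_h_le hε).ofReal.mul_prod
      (continuous_fejerWeight T).integrableOn_Ioc).mul_bdd (c := 1) ?_
      (Eventually.of_forall fun p => ?_)
    · exact Continuous.aestronglyMeasurable (by fun_prop)
    · rw [← Complex.ofReal_mul, Complex.norm_exp_ofReal_mul_I]
  calc ((∫ u in Ioi (0 : ℝ), h u * Real.exp (-(ε * u)) * fejerKernel T (y - u) : ℝ) : ℂ)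
      = ∫ u in Ioi (0 : ℝ), ∫ t in Ioc (-(2 * T)) (2 * T), F u t := by
        rw [← integral_complex_ofReal]
        refine integral_congr_ae (Eventually.of_forall fun u => ?_)
        simp only [F, mul_assoc, integral_const_mul]
        rw [Complex.ofReal_mul, Complex.ofReal_mul, ofReal_fejerKernel hT, Complex.ofReal_mul]
        simp only [mul_assoc]
    _ = ∫ t in Ioc (-(2 * T)) (2 * T), ∫ u in Ioi (0 : ℝ), F u t :=
        integral_integral_swap integrable_F
    _ = _ := by
        congr 1 with t
        rw [← laplace_h (ε + t * Complex.I) (by simpa using hε), ← integral_const_mul]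
        congr 1 with u
        simp only [F]
        push_cast
        rw [show (t : ℂ) * (y - u) * Complex.I = t * y * Complex.I + -(t * Complex.I * u) by ring,
          show -((ε + t * Complex.I) * u) = -(ε * u) + -(t * Complex.I * u) by ring,
          Complex.exp_add, Complex.exp_add]
        ring

lemma tendsto_setIntegral_mul_exp_mul_fejerKernel (measurable_h : Measurable h)
    (abs_h_le : ∀ u, |h u| ≤ C) (hT : 0 < T) (y : ℝ) :
    Tendsto (fun ε => ∫ u in Ioi (0 : ℝ), h u * Real.exp (-(ε * u)) * fejerKernel T (y - u))
      (𝓝[>] 0) (𝓝 (∫ u in Ioi (0 : ℝ), h u * fejerKernel T (y - u))) := by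
  have := (continuous_fejerKernel T).measurable
  refine tendsto_integral_filter_of_dominated_convergence (fun u => C * fejerKernel T (y - u))
    (Eventually.of_forall fun ε => Measurable.aestronglyMeasurable (by fun_prop)) ?_
    ((integrable_fejerKernel_sub hT y).const_mul C).integrableOn
    (Eventually.of_forall fun u => ?_)
  · filter_upwards [self_mem_nhdsWithin] with ε hε
    filter_upwards [ae_restrict_mem measurableSet_Ioi] with u hu
    have exp_le : Real.exp (-(ε * u)) ≤ 1 := Real.exp_le_one_iff.2
      (neg_nonpos.2 (mul_nonneg (mem_Ioi.1 hε).le (mem_Ioi.1 hu).le))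
    rw [norm_mul, norm_mul, Real.norm_of_nonneg (fejerKernel_nonneg hT.le _), Real.norm_eq_abs,
      Real.norm_of_nonneg (Real.exp_pos _).le]
    exact mul_le_mul_of_nonneg_right
      ((mul_le_of_le_one_right (abs_nonneg _) exp_le).trans (abs_h_le u))
      (fejerKernel_nonneg hT.le _)
  · have : Continuous fun ε : ℝ => h u * Real.exp (-(ε * u)) * fejerKernel T (y - u) := by fun_prop
    simpa using (this.tendsto 0).mono_left (nhdsWithin_le_nhds (s := Ioi 0))

lemma tendsto_setIntegral_fejerWeight_mul (continuousOn_G : ContinuousOn G {z | 0 ≤ z.re})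
    (T y : ℝ) :
    Tendsto (fun ε : ℝ => ∫ t in Ioc (-(2 * T)) (2 * T), fejerWeight T t *
        Complex.exp (t * y * Complex.I) * G (ε + t * Complex.I)) (𝓝[>] 0)
      (𝓝 (∫ t in Ioc (-(2 * T)) (2 * T), fejerWeight T t * Complex.exp (t * y * Complex.I) *
        G (t * Complex.I))) := by
  obtain ⟨D, norm_G_le⟩ := ((isCompact_Icc (a := (0 : ℝ)) (b := 1)).reProdIm
    (isCompact_Icc (a := -(2 * T)) (b := 2 * T))).exists_bound_of_continuousOn
    (continuousOn_G.mono fun z hz => (Complex.mem_reProdIm.1 hz).1.1)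
  have continuous_weight := continuous_fejerWeight T
  refine tendsto_integral_filter_of_dominated_convergence (fun t => ‖fejerWeight T t‖ * D) ?_ ?_
    (continuous_weight.norm.mul continuous_const).integrableOn_Ioc
    (Eventually.of_forall fun t => ?_)
  · filter_upwards [self_mem_nhdsWithin] with ε hε
    have continuous_G : Continuous fun t : ℝ => G (ε + t * Complex.I) :=
      continuousOn_G.comp_continuous (by fun_prop) fun t => by simpa using (mem_Ioi.1 hε).le
    exact ((continuous_weight.mul (by fun_prop)).mul continuous_G).aestronglyMeasurable
  · filter_upwards [Ioo_mem_nhdsGT (zero_lt_one' ℝ)] with ε hε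
    filter_upwards [ae_restrict_mem measurableSet_Ioc] with t ht
    rw [norm_mul, norm_mul, ← Complex.ofReal_mul, Complex.norm_exp_ofReal_mul_I, mul_one]
    gcongr
    exact norm_G_le _ (by simp [Complex.mem_reProdIm, hε.1.le, hε.2.le, ht.1.le, ht.2])
  · have continuous_path : Continuous fun ε : ℝ => (ε : ℂ) + t * Complex.I := by fun_prop
    have tendsto_path : Tendsto (fun ε : ℝ => (ε : ℂ) + t * Complex.I) (𝓝[>] 0)
        (𝓝[{z | 0 ≤ z.re}] (t * Complex.I)) := by
      refine tendsto_nhdsWithin_of_tendsto_nhds_of_eventually_within _ ?_ ?_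
      · simpa using (continuous_path.tendsto 0).mono_left nhdsWithin_le_nhds
      · filter_upwards [self_mem_nhdsWithin] with ε hε
        simpa using (mem_Ioi.1 hε).le
    exact ((continuousOn_G _ (by simp)).tendsto.comp tendsto_path).const_mul _

lemma setIntegral_mul_fejerKernel (measurable_h : Measurable h) (abs_h_le : ∀ u, |h u| ≤ C)
    (continuousOn_G : ContinuousOn G {z | 0 ≤ z.re})
    (laplace_h : ∀ z : ℂ, 0 < z.re → ∫ u in Ioi (0 : ℝ), (h u : ℂ) * Complex.exp (-(z * u)) = G z)
    (hT : 0 < T) (y : ℝ) :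
    ∫ u in Ioi (0 : ℝ), h u * fejerKernel T (y - u) =
      ∫ t in Ioc (-(2 * T)) (2 * T), fejerWeight T t * Complex.exp (t * y * Complex.I) *
        G (t * Complex.I) := by
  refine tendsto_nhds_unique ((Complex.continuous_ofReal.tendsto _).comp
    (tendsto_setIntegral_mul_exp_mul_fejerKernel measurable_h abs_h_le hT y))
    ((tendsto_setIntegral_fejerWeight_mul continuousOn_G T y).congr' ?_)
  filter_upwards [self_mem_nhdsWithin] with ε hε
  exact (setIntegral_mul_exp_mul_fejerKernel measurable_h abs_h_le laplace_h hε hT y).symm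

lemma tendsto_setIntegral_Ioc_mul_exp_atTop (g : ℝ → ℂ) (a b : ℝ) :
    Tendsto (fun y : ℝ => ∫ t in Ioc a b, Complex.exp (t * y * Complex.I) * g t) atTop (𝓝 0) := by
  have tendsto_scale : Tendsto (fun y : ℝ => -(1 / (2 * Real.pi)) * y) atTop (cocompact ℝ) :=
    (tendsto_id.const_mul_atTop_of_neg (by simp [Real.pi_pos])).mono_right atBot_le_cocompact
  refine ((Real.tendsto_integral_exp_smul_cocompact ((Ioc a b).indicator g)).comp
    tendsto_scale).congr fun y => ?_
  rw [Function.comp_apply, ← integral_indicator measurableSet_Ioc]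
  congr 1 with t
  by_cases ht : t ∈ Ioc a b
  · have : (Real.pi : ℂ) ≠ 0 := by exact_mod_cast Real.pi_ne_zero
    simp only [indicator_of_mem ht, Circle.smul_def, Real.fourierChar_apply, smul_eq_mul]
    push_cast
    congr 2
    field_simp
  · simp only [indicator_of_notMem ht, smul_zero]

lemma tendsto_setIntegral_mul_fejerKernel_sub (measurable_h : Measurable h)
    (abs_h_le : ∀ u, |h u| ≤ C) (continuousOn_G : ContinuousOn G {z | 0 ≤ z.re})
    (laplace_h : ∀ z : ℂ, 0 < z.re → ∫ u in Ioi (0 : ℝ), (h u : ℂ) * Complex.exp (-(z * u)) = G z)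
    (hT : 0 < T) :
    Tendsto (fun y => ∫ u in Ioi (0 : ℝ), h u * fejerKernel T (y - u)) atTop (𝓝 0) := by
  rw [← tendsto_ofReal_iff, Complex.ofReal_zero]
  refine (tendsto_setIntegral_Ioc_mul_exp_atTop (fun t => fejerWeight T t * G (t * Complex.I))
    (-(2 * T)) (2 * T)).congr fun y => ?_
  rw [setIntegral_mul_fejerKernel measurable_h abs_h_le continuousOn_G laplace_h hT]
  congr 1 with t
  ring

end Laplace

section Tauberian

open MeasureTheory Set Topology

variable {B : ℝ → ℝ} {C T δ : ℝ} {G : ℂ → ℂ}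

lemma integrable_mul_fejerKernel_sub (measurable_B : Measurable B) (B_nonneg : ∀ u, 0 ≤ B u)
    (B_le : ∀ u, B u ≤ C) (hT : 0 < T) (y : ℝ) :
    Integrable fun u => B u * fejerKernel T (y - u) :=
  (integrable_fejerKernel_sub hT y).bdd_mul measurable_B.aestronglyMeasurable
    (Eventually.of_forall fun u => (Real.norm_of_nonneg (B_nonneg u)).trans_le (B_le u))

lemma tendsto_setIntegral_Ioi_mul_fejerKernel_sub (measurable_B : Measurable B)
    (B_nonneg : ∀ u, 0 ≤ B u) (B_le : ∀ u, B u ≤ C) (continuousOn_G : ContinuousOn G {z | 0 ≤ z.re})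
    (laplace_B : ∀ z : ℂ, 0 < z.re →
      ∫ u in Ioi (0 : ℝ), ((B u - 1 : ℝ) : ℂ) * Complex.exp (-(z * u)) = G z) (hT : 0 < T) :
    Tendsto (fun y => ∫ u in Ioi (0 : ℝ), B u * fejerKernel T (y - u)) atTop
      (𝓝 (∫ v, fejerKernel 1 v)) := by
  have abs_sub_one_le (u : ℝ) : |B u - 1| ≤ C + 1 := by
    have := B_nonneg u
    have := B_le u
    rw [abs_le]
    constructor <;> linarith
  have key := (tendsto_setIntegral_mul_fejerKernel_sub (measurable_B.sub_const 1) abs_sub_one_le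
    continuousOn_G laplace_B hT).add (tendsto_setIntegral_Ioi_fejerKernel_sub hT)
  rw [zero_add] at key
  refine key.congr fun y => ?_
  have integrable_B := integrable_mul_fejerKernel_sub measurable_B B_nonneg B_le hT y
  have integrable_K := integrable_fejerKernel_sub hT y
  simp only [sub_one_mul]
  rw [integral_sub integrable_B.integrableOn integrable_K.integrableOn, sub_add_cancel]

lemma mul_exp_neg_le_of_monotone_exp_mul (monotone_B : Monotone fun u => Real.exp u * B u)
    (B_nonneg : ∀ u, 0 ≤ B u) {y z : ℝ} (hyz : y ≤ z) (hzy : z ≤ y + 2 * δ) :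
    B y * Real.exp (-(2 * δ)) ≤ B z := by
  have exp_mul_le : Real.exp y * B y ≤ Real.exp z * B z := monotone_B hyz
  calc B y * Real.exp (-(2 * δ)) ≤ B y * Real.exp (y - z) := by
        gcongr
        · exact B_nonneg y
        · linarith
    _ ≤ B z := by
        rw [Real.exp_sub, ← mul_div_assoc, div_le_iff₀ (Real.exp_pos z)]
        linarith

lemma setIntegral_Ioc_fejerKernel_sub (hδ : 0 ≤ δ) (y : ℝ) :
    ∫ u in Ioc (y - δ) (y + δ), fejerKernel T (y - u) = ∫ v in Ioc (-δ) δ, fejerKernel T v := by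
  rw [← intervalIntegral.integral_of_le (by linarith),
    ← intervalIntegral.integral_of_le (by linarith), intervalIntegral.integral_comp_sub_left]
  ring_nf

lemma mul_setIntegral_fejerKernel_le (measurable_B : Measurable B) (B_nonneg : ∀ u, 0 ≤ B u)
    (B_le : ∀ u, B u ≤ C) (monotone_B : Monotone fun u => Real.exp u * B u) (hT : 0 < T)
    (hδ : 0 ≤ δ) {y : ℝ} (hy : 0 ≤ y) :
    B y * Real.exp (-(2 * δ)) * (∫ v in Ioc (-δ) δ, fejerKernel T v) ≤
      ∫ u in Ioi (0 : ℝ), B u * fejerKernel T (y + δ - u) := by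
  have integrable_B := integrable_mul_fejerKernel_sub measurable_B B_nonneg B_le hT (y + δ)
  rw [← setIntegral_Ioc_fejerKernel_sub hδ (y + δ), ← integral_const_mul]
  calc ∫ u in Ioc (y + δ - δ) (y + δ + δ), B y * Real.exp (-(2 * δ)) * fejerKernel T (y + δ - u)
      ≤ ∫ u in Ioc (y + δ - δ) (y + δ + δ), B u * fejerKernel T (y + δ - u) := by
        refine setIntegral_mono_on ((integrable_fejerKernel_sub hT _).const_mul _).integrableOn
          integrable_B.integrableOn measurableSet_Ioc fun u hu => ?_
        exact mul_le_mul_of_nonneg_right (mul_exp_neg_le_of_monotone_exp_mul monotone_B B_nonneg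
          (by linarith [hu.1]) (by linarith [hu.2])) (fejerKernel_nonneg hT.le _)
    _ ≤ ∫ u in Ioi (0 : ℝ), B u * fejerKernel T (y + δ - u) :=
        setIntegral_mono_set integrable_B.integrableOn
          (Eventually.of_forall fun u => mul_nonneg (B_nonneg u) (fejerKernel_nonneg hT.le _))
          (Ioc_subset_Ioi_self.trans (Ioi_subset_Ioi (by linarith))).eventuallyLE

lemma setIntegral_mul_fejerKernel_le (measurable_B : Measurable B) (B_nonneg : ∀ u, 0 ≤ B u)
    (B_le : ∀ u, B u ≤ C) (monotone_B : Monotone fun u => Real.exp u * B u) (hT : 0 < T)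
    (hδ : 0 ≤ δ) (y : ℝ) :
    ∫ u in Ioi (0 : ℝ), B u * fejerKernel T (y - δ - u) ≤
      B y * Real.exp (2 * δ) * (∫ v in Ioc (-δ) δ, fejerKernel T v) +
        C * ((∫ v, fejerKernel 1 v) - ∫ v in Ioc (-δ) δ, fejerKernel T v) := by
  have integrable_B := integrable_mul_fejerKernel_sub measurable_B B_nonneg B_le hT (y - δ)
  have integrable_K := integrable_fejerKernel_sub hT (y - δ)
  set I := Ioc (y - δ - δ) (y - δ + δ)
  have near : ∫ u in I, B u * fejerKernel T (y - δ - u) ≤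
      B y * Real.exp (2 * δ) * ∫ v in Ioc (-δ) δ, fejerKernel T v := by
    rw [← setIntegral_Ioc_fejerKernel_sub hδ (y - δ), ← integral_const_mul]
    refine setIntegral_mono_on integrable_B.integrableOn (integrable_K.const_mul _).integrableOn
      measurableSet_Ioc fun u hu => mul_le_mul_of_nonneg_right ?_ (fejerKernel_nonneg hT.le _)
    have := mul_exp_neg_le_of_monotone_exp_mul (δ := δ) monotone_B B_nonneg (y := u) (z := y)
      (by linarith [hu.2]) (by linarith [hu.1])
    rwa [Real.exp_neg, ← div_eq_mul_inv, div_le_iff₀ (Real.exp_pos _)] at this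
  have far : ∫ u in Iᶜ, B u * fejerKernel T (y - δ - u) ≤
      C * ((∫ v, fejerKernel 1 v) - ∫ v in Ioc (-δ) δ, fejerKernel T v) := by
    rw [← integral_fejerKernel hT, ← integral_sub_left_eq_self (fejerKernel T) volume (y - δ),
      ← setIntegral_Ioc_fejerKernel_sub hδ (y - δ), ← setIntegral_compl measurableSet_Ioc
      integrable_K, ← integral_const_mul]
    exact setIntegral_mono_on integrable_B.integrableOn (integrable_K.const_mul C).integrableOn
      measurableSet_Ioc.compl fun u _ =>
      mul_le_mul_of_nonneg_right (B_le u) (fejerKernel_nonneg hT.le _)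
  calc ∫ u in Ioi (0 : ℝ), B u * fejerKernel T (y - δ - u)
      ≤ ∫ u, B u * fejerKernel T (y - δ - u) := setIntegral_le_integral integrable_B
        (Eventually.of_forall fun u => mul_nonneg (B_nonneg u) (fejerKernel_nonneg hT.le _))
    _ = (∫ u in I, B u * fejerKernel T (y - δ - u)) +
        ∫ u in Iᶜ, B u * fejerKernel T (y - δ - u) :=
        (integral_add_compl measurableSet_Ioc integrable_B).symm
    _ ≤ _ := add_le_add near far

lemma exists_pos_mul_exp_lt_one {a : ℝ} (ha : a < 1) : ∃ δ > 0, a * Real.exp (2 * δ) < 1 := by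
  have continuous_exp : Continuous fun δ : ℝ => a * Real.exp (2 * δ) := by fun_prop
  have tendsto_exp : Tendsto (fun δ : ℝ => a * Real.exp (2 * δ)) (𝓝[>] 0) (𝓝 a) := by
    simpa using (continuous_exp.tendsto 0).mono_left nhdsWithin_le_nhds
  exact (eventually_mem_nhdsWithin.and (tendsto_exp.eventually_lt_const ha)).exists

lemma eventually_lt_of_tendsto_setIntegral_fejerKernel (measurable_B : Measurable B)
    (B_nonneg : ∀ u, 0 ≤ B u) (B_le : ∀ u, B u ≤ C)
    (monotone_B : Monotone fun u => Real.exp u * B u)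
    (tendsto_B : ∀ T > 0, Tendsto (fun y => ∫ u in Ioi (0 : ℝ), B u * fejerKernel T (y - u)) atTop
      (𝓝 (∫ v, fejerKernel 1 v))) {a : ℝ} (ha : 1 < a) : ∀ᶠ y in atTop, B y < a := by
  have a_pos : 0 < a := by linarith
  obtain ⟨δ, hδ, exp_lt⟩ := exists_pos_mul_exp_lt_one (inv_lt_one_of_one_lt₀ ha)
  rw [inv_mul_lt_one₀ a_pos] at exp_lt
  set c := ∫ v, fejerKernel 1 v
  have c_lt : c < a * Real.exp (-(2 * δ)) * c :=
    lt_mul_of_one_lt_left integral_fejerKernel_one_pos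
      (by rwa [Real.exp_neg, ← div_eq_mul_inv, one_lt_div (Real.exp_pos _)])
  obtain ⟨T, hT, c_lt_mul⟩ := ((eventually_gt_atTop 0).and
    (((tendsto_setIntegral_fejerKernel hδ).const_mul _).eventually_const_lt c_lt)).exists
  set m := ∫ v in Ioc (-δ) δ, fejerKernel T v
  filter_upwards [((tendsto_B T hT).comp (tendsto_atTop_add_const_right _ δ tendsto_id)
    ).eventually_lt_const c_lt_mul, eventually_ge_atTop 0] with y hlt hy
  have := (mul_setIntegral_fejerKernel_le measurable_B B_nonneg B_le monotone_B hT hδ.le hy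
    ).trans_lt hlt
  have m_nonneg : 0 ≤ m := integral_nonneg (fejerKernel_nonneg hT.le)
  exact lt_of_mul_lt_mul_right (lt_of_mul_lt_mul_right this m_nonneg) (Real.exp_pos _).le

lemma eventually_gt_of_tendsto_setIntegral_fejerKernel (measurable_B : Measurable B)
    (B_nonneg : ∀ u, 0 ≤ B u) (B_le : ∀ u, B u ≤ C)
    (monotone_B : Monotone fun u => Real.exp u * B u)
    (tendsto_B : ∀ T > 0, Tendsto (fun y => ∫ u in Ioi (0 : ℝ), B u * fejerKernel T (y - u)) atTop
      (𝓝 (∫ v, fejerKernel 1 v))) {a : ℝ} (ha : a < 1) : ∀ᶠ y in atTop, a < B y := by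
  obtain ⟨δ, hδ, exp_lt⟩ := exists_pos_mul_exp_lt_one ha
  set c := ∫ v, fejerKernel 1 v
  have tendsto_bound : Tendsto (fun T => a * Real.exp (2 * δ) * (∫ v in Ioc (-δ) δ, fejerKernel T v)
      + C * (c - ∫ v in Ioc (-δ) δ, fejerKernel T v)) atTop (𝓝 (a * Real.exp (2 * δ) * c)) := by
    have mass := tendsto_setIntegral_fejerKernel hδ
    simpa [c] using (mass.const_mul (a * Real.exp (2 * δ))).add ((mass.const_sub c).const_mul C)
  obtain ⟨T, hT, bound_lt⟩ := ((eventually_gt_atTop 0).and (tendsto_bound.eventually_lt_const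
    (mul_lt_of_lt_one_left integral_fejerKernel_one_pos exp_lt))).exists
  set m := ∫ v in Ioc (-δ) δ, fejerKernel T v
  filter_upwards [((tendsto_B T hT).comp (tendsto_atTop_add_const_right _ (-δ) tendsto_id)
    ).eventually_const_lt bound_lt] with y hlt
  have := lt_of_add_lt_add_right (hlt.trans_le
    (setIntegral_mul_fejerKernel_le measurable_B B_nonneg B_le monotone_B hT hδ.le y))
  have m_nonneg : 0 ≤ m := integral_nonneg (fejerKernel_nonneg hT.le)
  exact lt_of_mul_lt_mul_right (lt_of_mul_lt_mul_right this m_nonneg) (Real.exp_pos _).le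

theorem tendsto_one_of_continuousOn_laplace (measurable_B : Measurable B)
    (B_nonneg : ∀ u, 0 ≤ B u) (B_le : ∀ u, B u ≤ C)
    (monotone_B : Monotone fun u => Real.exp u * B u)
    (continuousOn_G : ContinuousOn G {z | 0 ≤ z.re})
    (laplace_B : ∀ z : ℂ, 0 < z.re →
      ∫ u in Ioi (0 : ℝ), ((B u - 1 : ℝ) : ℂ) * Complex.exp (-(z * u)) = G z) :
    Tendsto B atTop (𝓝 1) := by
  have tendsto_B (T : ℝ) (hT : T > 0) := tendsto_setIntegral_Ioi_mul_fejerKernel_sub measurable_B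
    B_nonneg B_le continuousOn_G laplace_B hT
  exact tendsto_order.2
    ⟨fun a ha => eventually_gt_of_tendsto_setIntegral_fejerKernel measurable_B B_nonneg B_le
      monotone_B tendsto_B ha,
    fun a ha => eventually_lt_of_tendsto_setIntegral_fejerKernel measurable_B B_nonneg B_le
      monotone_B tendsto_B ha⟩

end Tauberian

section PrimeNumberTheorem

open MeasureTheory Set Topology ArithmeticFunction

/-- The continuous extension of `-ζ'(s)/ζ(s) - 1/(s - 1)` to the half-plane `1 ≤ Re s`. -/
noncomputable def negZetaLogDerivAux (s : ℂ) : ℂ :=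
  vonMangoldt.LFunctionResidueClassAux (1 : ZMod 1) s

lemma continuousOn_negZetaLogDerivAux : ContinuousOn negZetaLogDerivAux {s | 1 ≤ s.re} :=
  vonMangoldt.continuousOn_LFunctionResidueClassAux _

lemma negZetaLogDerivAux_eq {s : ℂ} (hs : 1 < s.re) :
    negZetaLogDerivAux s = LSeries (fun n => ((vonMangoldt n : ℝ) : ℂ)) s - 1 / (s - 1) := by
  have residueClass_one : vonMangoldt.residueClass (1 : ZMod 1) = fun n => vonMangoldt n :=
    funext fun n => if_pos (Subsingleton.elim _ _)
  simp [negZetaLogDerivAux, vonMangoldt.eqOn_LFunctionResidueClassAux isUnit_one hs,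
    residueClass_one]

/-- The Laplace transform of `u ↦ ψ(eᵘ) e⁻ᵘ - 1`, as a continuous function on `0 ≤ Re z`. -/
noncomputable def laplacePsi (z : ℂ) : ℂ := (negZetaLogDerivAux (1 + z) - 1) / (1 + z)

lemma one_add_ne_zero_of_re_nonneg {z : ℂ} (hz : 0 ≤ z.re) : 1 + z ≠ 0 := fun h => by
  have := congrArg Complex.re h
  simp only [Complex.add_re, Complex.one_re, Complex.zero_re] at this
  linarith

lemma continuousOn_laplacePsi : ContinuousOn laplacePsi {z | 0 ≤ z.re} := by
  refine ContinuousOn.div (ContinuousOn.sub ?_ continuousOn_const) (by fun_prop)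
    fun z hz => one_add_ne_zero_of_re_nonneg hz
  exact continuousOn_negZetaLogDerivAux.comp (by fun_prop) fun z hz => by simpa using hz

lemma psi_exp_mul_exp_neg_le (u : ℝ) :
    Chebyshev.psi (Real.exp u) * Real.exp (-u) ≤ Real.log 4 + 4 := by
  rw [Real.exp_neg, ← div_eq_mul_inv, div_le_iff₀ (Real.exp_pos u)]
  exact Chebyshev.psi_le_const_mul_self (Real.exp_pos u).le

lemma psi_exp_mul_exp_neg_nonneg (u : ℝ) : 0 ≤ Chebyshev.psi (Real.exp u) * Real.exp (-u) :=
  mul_nonneg (Chebyshev.psi_nonneg _) (Real.exp_pos _).le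

lemma measurable_psi_exp_mul_exp_neg :
    Measurable fun u => Chebyshev.psi (Real.exp u) * Real.exp (-u) :=
  (Chebyshev.psi_mono.measurable.comp Real.measurable_exp).mul (by fun_prop)

lemma integrableOn_cexp_neg_mul {z : ℂ} (hz : 0 < z.re) :
    IntegrableOn (fun u : ℝ => Complex.exp (-(z * u))) (Ioi 0) := by
  simpa using integrableOn_exp_mul_complex_Ioi (a := -z) (by simpa using hz) 0

lemma integral_cexp_neg_mul {z : ℂ} (hz : 0 < z.re) :
    ∫ u in Ioi (0 : ℝ), Complex.exp (-(z * u)) = 1 / z := by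
  simpa using integral_exp_mul_complex_Ioi (a := -z) (by simpa using hz) 0

lemma psi_eq_sum_Icc_one (x : ℝ) :
    Chebyshev.psi x = ∑ n ∈ Finset.Icc 1 ⌊x⌋₊, vonMangoldt n := by
  rw [Chebyshev.psi, ← Finset.Icc_add_one_left_eq_Ioc, zero_add]

lemma LSeries_vonMangoldt_one_add {z : ℂ} (hz : 0 < z.re) :
    LSeries (fun n => ((vonMangoldt n : ℝ) : ℂ)) (1 + z) = (1 + z) * ∫ u in Ioi (0 : ℝ),
      ((Chebyshev.psi (Real.exp u) * Real.exp (-u) : ℝ) : ℂ) * Complex.exp (-(z * u)) := by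
  have isBigO_sum : (fun n : ℕ => ∑ k ∈ Finset.Icc 1 n, vonMangoldt k) =O[atTop]
      fun n : ℕ => (n : ℝ) ^ (1 : ℝ) := by
    refine Asymptotics.IsBigO.of_bound (Real.log 4 + 4) (Eventually.of_forall fun n => ?_)
    have psi_eq := psi_eq_sum_Icc_one n
    rw [Nat.floor_natCast] at psi_eq
    rw [← psi_eq, Real.norm_of_nonneg (Chebyshev.psi_nonneg _), Real.rpow_one, Real.norm_natCast]
    exact Chebyshev.psi_le_const_mul_self n.cast_nonneg
  rw [LSeries_eq_mul_integral_of_nonneg _ zero_le_one (by simpa using hz) isBigO_sum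
    fun n => vonMangoldt_nonneg, ← Real.exp_zero, ← integral_comp_exp_Ioi]
  congr 2 with u
  have cpow_exp : ((Real.exp u : ℝ) : ℂ) ^ (-((1 + z) + 1)) = Complex.exp (-(2 + z) * u) := by
    rw [Complex.cpow_def_of_ne_zero (by simp), ← Complex.ofReal_log (Real.exp_pos u).le,
      Real.log_exp]
    ring_nf
  rw [← Complex.ofReal_sum, ← psi_eq_sum_Icc_one, cpow_exp, Complex.real_smul]
  push_cast
  rw [mul_left_comm, ← Complex.exp_add, mul_assoc, ← Complex.exp_add]
  ring_nf

lemma setIntegral_psi_exp_sub_one_mul_cexp {z : ℂ} (hz : 0 < z.re) :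
    ∫ u in Ioi (0 : ℝ), ((Chebyshev.psi (Real.exp u) * Real.exp (-u) - 1 : ℝ) : ℂ) *
      Complex.exp (-(z * u)) = laplacePsi z := by
  have integrable_exp := integrableOn_cexp_neg_mul hz
  have integrable_psi : IntegrableOn (fun u : ℝ =>
      ((Chebyshev.psi (Real.exp u) * Real.exp (-u) : ℝ) : ℂ) * Complex.exp (-(z * u))) (Ioi 0) :=
    integrable_exp.bdd_mul
      (Complex.measurable_ofReal.comp measurable_psi_exp_mul_exp_neg).aestronglyMeasurable
      (Eventually.of_forall fun u => by
        rw [Complex.norm_of_nonneg (psi_exp_mul_exp_neg_nonneg u)]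
        exact psi_exp_mul_exp_neg_le u)
  have z_ne_zero : z ≠ 0 := fun h => by simp [h] at hz
  have one_add_ne_zero := one_add_ne_zero_of_re_nonneg hz.le
  simp only [Complex.ofReal_sub _ (1 : ℝ), Complex.ofReal_one, sub_one_mul]
  rw [integral_sub integrable_psi integrable_exp, integral_cexp_neg_mul hz, laplacePsi,
    negZetaLogDerivAux_eq (by simpa using hz), LSeries_vonMangoldt_one_add hz,
    add_sub_cancel_left, eq_div_iff one_add_ne_zero]
  field_simp
  ring

lemma tendsto_psi_exp_mul_exp_neg :
    Tendsto (fun u => Chebyshev.psi (Real.exp u) * Real.exp (-u)) atTop (𝓝 1) := by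
  refine tendsto_one_of_continuousOn_laplace measurable_psi_exp_mul_exp_neg
    psi_exp_mul_exp_neg_nonneg psi_exp_mul_exp_neg_le ?_ continuousOn_laplacePsi
    fun z hz => setIntegral_psi_exp_sub_one_mul_cexp hz
  have exp_mul (u : ℝ) : Real.exp u * (Chebyshev.psi (Real.exp u) * Real.exp (-u)) =
      Chebyshev.psi (Real.exp u) := by
    rw [mul_left_comm, ← Real.exp_add, add_neg_cancel, Real.exp_zero, mul_one]
  simpa only [exp_mul, Function.comp_def] using Chebyshev.psi_mono.comp Real.exp_monotone

theorem primeNumberTheorem : Tendsto (fun x => Chebyshev.psi x / x) atTop (𝓝 1) := by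
  refine (tendsto_psi_exp_mul_exp_neg.comp Real.tendsto_log_atTop).congr' ?_
  filter_upwards [eventually_gt_atTop 0] with x hx
  rw [Function.comp_apply, Real.exp_neg, Real.exp_log hx, div_eq_mul_inv]

end PrimeNumberTheorem

section Summatory

open Asymptotics ArithmeticFunction

/-- The weight `N (1 + log N) ^ a` measuring the order of summatory functions. The shift by `1`
keeps it positive for every `N ≥ 1`. -/
noncomputable def logWeight (a N : ℕ) : ℝ := N * (1 + Real.log N) ^ a

/-- The summatory function `N ↦ ∑_{1 ≤ n ≤ N} f n`, as a linear map in `f`. -/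
noncomputable def summatory : ArithmeticFunction ℝ →ₗ[ℝ] ℕ → ℝ where
  toFun f N := ∑ n ∈ Finset.Ioc 0 N, f n
  map_add' f g := by ext N; simp [Finset.sum_add_distrib]
  map_smul' c f := by ext N; simp [Finset.mul_sum]

/-- Pointwise multiplication by the logarithm, which is a derivation of the Dirichlet ring. -/
noncomputable def logMul : Module.End ℝ (ArithmeticFunction ℝ) where
  toFun f := log.pmul f
  map_add' f g := by ext n; simp [mul_add]
  map_smul' c f := by ext n; simp [mul_left_comm]

lemma summatory_apply (f : ArithmeticFunction ℝ) (N : ℕ) :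
    summatory f N = ∑ n ∈ Finset.Ioc 0 N, f n := rfl

lemma logMul_apply (f : ArithmeticFunction ℝ) (n : ℕ) : logMul f n = Real.log n * f n := rfl

lemma logMul_pow_apply (b : ℕ) (f : ArithmeticFunction ℝ) (n : ℕ) :
    (logMul ^ b) f n = Real.log n ^ b * f n := by
  induction b with
  | zero => simp
  | succ b ih => rw [pow_succ', Module.End.mul_apply, logMul_apply, ih, pow_succ', mul_assoc]

lemma logMul_mul (f g : ArithmeticFunction ℝ) :
    logMul (f * g) = logMul f * g + f * logMul g := by
  ext n
  simp only [logMul_apply, ArithmeticFunction.add_apply, mul_apply, Finset.mul_sum,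
    ← Finset.sum_add_distrib]
  refine Finset.sum_congr rfl fun x hx => ?_
  have hlog : Real.log n = Real.log x.1 + Real.log x.2 := by
    have h1 := Nat.left_ne_zero_of_mem_divisorsAntidiagonal hx
    have h2 := Nat.right_ne_zero_of_mem_divisorsAntidiagonal hx
    rw [← (Nat.mem_divisorsAntidiagonal.1 hx).1, Nat.cast_mul,
      Real.log_mul (by exact_mod_cast h1) (by exact_mod_cast h2)]
  rw [hlog]
  ring

lemma one_le_one_add_log_natCast (N : ℕ) : 1 ≤ 1 + Real.log N :=
  le_add_of_nonneg_right (Real.log_natCast_nonneg N)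

lemma one_add_log_natCast_pos (N : ℕ) : 0 < 1 + Real.log N :=
  one_pos.trans_le (one_le_one_add_log_natCast N)

lemma log_natCast_le_log_natCast {M N : ℕ} (h : M ≤ N) : Real.log M ≤ Real.log N := by
  rcases M.eq_zero_or_pos with rfl | hM
  · simpa using Real.log_natCast_nonneg N
  · exact Real.log_le_log (by exact_mod_cast hM) (by exact_mod_cast h)

lemma logWeight_nonneg (a N : ℕ) : 0 ≤ logWeight a N :=
  mul_nonneg N.cast_nonneg (pow_nonneg (one_add_log_natCast_pos N).le a)

lemma logWeight_succ (a : ℕ) :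
    logWeight (a + 1) = fun N : ℕ => (1 + Real.log N) * logWeight a N := by
  ext N
  simp only [logWeight]
  ring

lemma tendsto_log_natCast_atTop : Tendsto (fun N : ℕ => Real.log N) atTop atTop :=
  Real.tendsto_log_atTop.comp tendsto_natCast_atTop_atTop

lemma isLittleO_one_one_add_log :
    (fun _ : ℕ => (1 : ℝ)) =o[atTop] fun N : ℕ => 1 + Real.log N :=
  (isLittleO_const_left_of_ne one_ne_zero).2 <|
    tendsto_norm_atTop_atTop.comp (tendsto_atTop_add_const_left _ 1 tendsto_log_natCast_atTop)

lemma isBigO_log_one_add_log :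
    (fun N : ℕ => Real.log N) =O[atTop] fun N : ℕ => 1 + Real.log N :=
  .of_norm_le fun N => by
    rw [Real.norm_of_nonneg (Real.log_natCast_nonneg N)]
    linarith

lemma logWeight_isLittleO_succ (a : ℕ) : logWeight a =o[atTop] logWeight (a + 1) := by
  simpa only [logWeight_succ, one_mul]
    using isLittleO_one_one_add_log.mul_isBigO (isBigO_refl (logWeight a) atTop)

lemma isBigO_logWeight_of_le {a b : ℕ} (h : a ≤ b) : logWeight a =O[atTop] logWeight b := by
  induction b, h using Nat.le_induction with
  | base => exact isBigO_refl _ _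
  | succ b _ ih => exact ih.trans (logWeight_isLittleO_succ b).isBigO

lemma isLittleO_log_mul {u : ℕ → ℝ} {a : ℕ} (hu : u =o[atTop] logWeight a) :
    (fun N : ℕ => Real.log N * u N) =o[atTop] logWeight (a + 1) := by
  simpa only [logWeight_succ] using isBigO_log_one_add_log.mul_isLittleO hu

lemma exists_abs_summatory_le {g : ArithmeticFunction ℝ} {b : ℕ}
    (hg : summatory g =O[atTop] logWeight b) :
    ∃ C, 0 ≤ C ∧ ∀ N, |summatory g N| ≤ C * logWeight b N := by
  have hzero : ∀ N, logWeight b N = 0 → summatory g N = 0 := fun N hN => by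
    have : N = 0 := by
      simpa [logWeight, (one_add_log_natCast_pos N).ne'] using hN
    simp [summatory_apply, this]
  obtain ⟨C, hC⟩ := (isBigO_nat_atTop_iff hzero).1 hg
  refine ⟨|C|, abs_nonneg C, fun N => (hC N).trans ?_⟩
  rw [Real.norm_of_nonneg (logWeight_nonneg b N)]
  exact mul_le_mul_of_nonneg_right (le_abs_self C) (logWeight_nonneg b N)

lemma exists_abs_le_mul_logWeight_add {u : ℕ → ℝ} {a : ℕ} (hu : u =o[atTop] logWeight a)
    {ε : ℝ} (hε : 0 < ε) : ∃ D, 0 ≤ D ∧ ∀ N, |u N| ≤ ε * logWeight a N + D := by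
  obtain ⟨N₀, hN₀⟩ := eventually_atTop.1 (hu.def hε)
  have hsum : ∀ s : Finset ℕ, 0 ≤ ∑ n ∈ s, |u n| :=
    fun s => Finset.sum_nonneg fun _ _ => abs_nonneg _
  refine ⟨∑ n ∈ Finset.range N₀, |u n|, hsum _, fun N => ?_⟩
  rcases lt_or_ge N N₀ with h | h
  · exact (Finset.single_le_sum (f := fun n => |u n|) (fun _ _ => abs_nonneg _)
      (Finset.mem_range.2 h)).trans
      (le_add_of_nonneg_left (mul_nonneg hε.le (logWeight_nonneg a N)))
  · have := hN₀ N h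
    rw [Real.norm_of_nonneg (logWeight_nonneg a N)] at this
    exact this.trans (le_add_of_nonneg_right (hsum _))

lemma abs_summatory_le_summatory {f h : ArithmeticFunction ℝ} (hfh : ∀ n, n ≠ 0 → |f n| ≤ h n)
    (N : ℕ) : |summatory f N| ≤ summatory h N :=
  (Finset.abs_sum_le_sum_abs _ _).trans <|
    Finset.sum_le_sum fun n hn => hfh n (Finset.mem_Ioc.1 hn).1.ne'

lemma summatory_isBigO_of_abs_le {f h : ArithmeticFunction ℝ}
    (hfh : ∀ n, n ≠ 0 → |f n| ≤ h n) : summatory f =O[atTop] summatory h :=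
  .of_norm_le fun N => abs_summatory_le_summatory hfh N

lemma sum_mul_eq_summatory_mul_sub_sum (f : ArithmeticFunction ℝ) (w : ℕ → ℝ) (N : ℕ) :
    ∑ n ∈ Finset.Ioc 0 N, f n * w n
      = summatory f N * w N - ∑ n ∈ Finset.range N, summatory f n * (w (n + 1) - w n) := by
  simp only [summatory_apply]
  induction N with
  | zero => simp
  | succ N ih =>
    rw [Finset.sum_Ioc_succ_top N.zero_le, ih, Finset.sum_range_succ,
      Finset.sum_Ioc_succ_top N.zero_le]
    ring

lemma abs_summatory_le_mul_natCast {g : ArithmeticFunction ℝ} {b : ℕ} {C : ℝ} (hC : 0 ≤ C)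
    (hg : ∀ N, |summatory g N| ≤ C * logWeight b N) {n N : ℕ} (h : n ≤ N) :
    |summatory g n| ≤ C * (1 + Real.log N) ^ b * n := by
  have hpow : (1 + Real.log n) ^ b ≤ (1 + Real.log N) ^ b :=
    pow_le_pow_left₀ (one_add_log_natCast_pos n).le
      (add_le_add_right (log_natCast_le_log_natCast h) 1) b
  calc |summatory g n| ≤ C * (n * (1 + Real.log n) ^ b) := hg n
    _ ≤ C * (n * (1 + Real.log N) ^ b) := by gcongr
    _ = C * (1 + Real.log N) ^ b * n := by ring

lemma abs_sum_summatory_mul_sub_le {g : ArithmeticFunction ℝ} {b : ℕ} {C : ℝ} (hC : 0 ≤ C)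
    (hg : ∀ N, |summatory g N| ≤ C * logWeight b N) (w : ℕ → ℝ) (N : ℕ) :
    |∑ n ∈ Finset.range N, summatory g n * (w (n + 1) - w n)|
      ≤ C * (1 + Real.log N) ^ b * ∑ n ∈ Finset.range N, n * |w (n + 1) - w n| := by
  rw [Finset.mul_sum]
  refine (Finset.abs_sum_le_sum_abs _ _).trans (Finset.sum_le_sum fun n hn => ?_)
  rw [abs_mul, ← mul_assoc]
  gcongr
  exact abs_summatory_le_mul_natCast hC hg (Finset.mem_range.1 hn).le

lemma natCast_mul_abs_inv_succ_sub_inv_le (n : ℕ) :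
    (n : ℝ) * |((n + 1 : ℕ) : ℝ)⁻¹ - (n : ℝ)⁻¹| ≤ ((n : ℝ) + 1)⁻¹ := by
  rcases n.eq_zero_or_pos with rfl | hn
  · simp
  have : (0 : ℝ) < n := by exact_mod_cast hn
  have hdiff : ((n + 1 : ℕ) : ℝ)⁻¹ - (n : ℝ)⁻¹ = -(n * ((n : ℝ) + 1))⁻¹ := by
    push_cast
    field_simp
    ring
  rw [hdiff, abs_neg, abs_of_pos (by positivity)]
  exact le_of_eq (by field_simp)

lemma natCast_mul_abs_log_succ_sub_log_le_one (n : ℕ) :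
    (n : ℝ) * |Real.log (n + 1 : ℕ) - Real.log n| ≤ 1 := by
  rcases n.eq_zero_or_pos with rfl | hn
  · simp
  have hn0 : (0 : ℝ) < n := by exact_mod_cast hn
  rw [abs_of_nonneg (sub_nonneg.2 (log_natCast_le_log_natCast n.le_succ)),
    ← Real.log_div (by positivity) hn0.ne', mul_comm, ← le_div_iff₀ hn0]
  refine (Real.log_le_sub_one_of_pos (by positivity)).trans_eq ?_
  push_cast
  field_simp
  ring

lemma sum_range_inv_le_one_add_log (N : ℕ) :
    ∑ n ∈ Finset.range N, ((n : ℝ) + 1)⁻¹ ≤ 1 + Real.log N := by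
  simpa [harmonic] using harmonic_le_one_add_log N

lemma exists_sum_div_le {g : ArithmeticFunction ℝ} {b : ℕ}
    (hg : summatory g =O[atTop] logWeight b) :
    ∃ C, 0 ≤ C ∧ ∀ N : ℕ, ∑ n ∈ Finset.Ioc 0 N, g n / n ≤ C * (1 + Real.log N) ^ (b + 1) := by
  obtain ⟨C, hC, hle⟩ := exists_abs_summatory_le hg
  refine ⟨2 * C, by positivity, fun N => ?_⟩
  have hL := one_le_one_add_log_natCast N
  set K := C * (1 + Real.log N) ^ b with hK
  have hK0 : 0 ≤ K := by positivity
  have boundary : summatory g N * (N : ℝ)⁻¹ ≤ K := by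
    rcases N.eq_zero_or_pos with rfl | hN
    · simpa using hK0
    · rw [← div_eq_mul_inv, div_le_iff₀ (by exact_mod_cast hN)]
      exact (le_abs_self _).trans (abs_summatory_le_mul_natCast hC hle le_rfl)
  have increments : |∑ n ∈ Finset.range N, summatory g n * (((n + 1 : ℕ) : ℝ)⁻¹ - (n : ℝ)⁻¹)|
      ≤ K * (1 + Real.log N) :=
    (abs_sum_summatory_mul_sub_le hC hle (fun n => (n : ℝ)⁻¹) N).trans <|
      mul_le_mul_of_nonneg_left ((Finset.sum_le_sum fun n _ =>
        natCast_mul_abs_inv_succ_sub_inv_le n).trans (sum_range_inv_le_one_add_log N)) hK0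
  simp only [div_eq_mul_inv, sum_mul_eq_summatory_mul_sub_sum g (fun n => (n : ℝ)⁻¹)]
  calc _ ≤ K + K * (1 + Real.log N) := by linarith [neg_le_of_abs_le increments]
    _ ≤ 2 * (K * (1 + Real.log N)) := by linarith [le_mul_of_one_le_right hK0 hL]
    _ = 2 * C * (1 + Real.log N) ^ (b + 1) := by rw [hK]; ring

lemma isBigO_log_mul_summatory_sub_summatory_logMul {g : ArithmeticFunction ℝ} {b : ℕ}
    (hg : summatory g =O[atTop] logWeight b) :
    (fun N : ℕ => Real.log N * summatory g N - summatory (logMul g) N) =O[atTop] logWeight b := by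
  obtain ⟨C, hC, hle⟩ := exists_abs_summatory_le hg
  refine .of_bound C (.of_forall fun N => ?_)
  have hlogMul : summatory (logMul g) N = ∑ n ∈ Finset.Ioc 0 N, g n * Real.log n := by
    simp only [summatory_apply, logMul_apply, mul_comm]
  have := one_add_log_natCast_pos N
  rw [hlogMul, sum_mul_eq_summatory_mul_sub_sum g (fun n => Real.log n), mul_comm, sub_sub_cancel,
    Real.norm_of_nonneg (logWeight_nonneg b N)]
  calc |∑ n ∈ Finset.range N, summatory g n * (Real.log (n + 1 : ℕ) - Real.log n)|
      ≤ C * (1 + Real.log N) ^ b * ∑ n ∈ Finset.range N,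
          n * |Real.log (n + 1 : ℕ) - Real.log n| :=
        abs_sum_summatory_mul_sub_le hC hle (fun n => Real.log n) N
    _ ≤ C * (1 + Real.log N) ^ b * ∑ _n ∈ Finset.range N, 1 := by
        gcongr with n
        exact natCast_mul_abs_log_succ_sub_log_le_one n
    _ = C * logWeight b N := by
        rw [Finset.sum_const, Finset.card_range, nsmul_eq_mul, logWeight]
        ring

lemma summatory_logMul_isLittleO {f : ArithmeticFunction ℝ} {a : ℕ}
    (hf : summatory f =o[atTop] logWeight a) :
    summatory (logMul f) =o[atTop] logWeight (a + 1) := by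
  have hdiff := (isBigO_log_mul_summatory_sub_summatory_logMul hf.isBigO).trans_isLittleO
    (logWeight_isLittleO_succ a)
  exact ((isLittleO_log_mul hf).sub hdiff).congr_left fun N => by ring

lemma abs_summatory_mul_le {h g : ArithmeticFunction ℝ} {a : ℕ} {A D : ℝ} (hA : 0 ≤ A)
    (hh : ∀ N, |summatory h N| ≤ A * logWeight a N + D) (hg : ∀ n, 0 ≤ g n) (N : ℕ) :
    |summatory (h * g) N|
      ≤ A * logWeight a N * (∑ m ∈ Finset.Ioc 0 N, g m / m) + D * summatory g N := by
  rw [mul_comm h g, summatory_apply, sum_Ioc_mul_eq_sum_sum, summatory_apply g, Finset.mul_sum,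
    Finset.mul_sum, ← Finset.sum_add_distrib]
  refine (Finset.abs_sum_le_sum_abs _ _).trans (Finset.sum_le_sum fun m _ => ?_)
  have hdiv : logWeight a (N / m) ≤ N / m * (1 + Real.log N) ^ a := by
    have hlog := log_natCast_le_log_natCast (N.div_le_self m)
    have hpos := (one_add_log_natCast_pos (N / m)).le
    exact mul_le_mul Nat.cast_div_le (pow_le_pow_left₀ hpos (by linarith) a) (by positivity)
      (by positivity)
  rw [abs_mul, abs_of_nonneg (hg m)]
  calc g m * |summatory h (N / m)|
      ≤ g m * (A * (N / m * (1 + Real.log N) ^ a) + D) := by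
        have := hg m
        gcongr
        exact (hh _).trans (by gcongr)
    _ = A * logWeight a N * (g m / m) + D * g m := by
        rw [logWeight]
        ring

lemma logWeight_mul_one_add_log_pow (a b N : ℕ) :
    logWeight a N * (1 + Real.log N) ^ b = logWeight (a + b) N := by
  simp only [logWeight, pow_add, mul_assoc]

lemma summatory_mul_isBigO {h g : ArithmeticFunction ℝ} {a b : ℕ}
    (hh : summatory h =O[atTop] logWeight a) (hg : summatory g =O[atTop] logWeight b)
    (hg0 : ∀ n, 0 ≤ g n) : summatory (h * g) =O[atTop] logWeight (a + b + 1) := by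
  obtain ⟨A, hA, hle⟩ := exists_abs_summatory_le hh
  obtain ⟨B, _, hsum⟩ := exists_sum_div_le hg
  refine .of_bound (A * B) (.of_forall fun N => ?_)
  have hw := logWeight_nonneg a N
  rw [Real.norm_of_nonneg (logWeight_nonneg _ N), Real.norm_eq_abs, add_assoc,
    ← logWeight_mul_one_add_log_pow]
  calc |summatory (h * g) N|
      ≤ A * logWeight a N * (∑ m ∈ Finset.Ioc 0 N, g m / m) + 0 * summatory g N :=
        abs_summatory_mul_le hA (by simpa using hle) hg0 N
    _ ≤ A * logWeight a N * (B * (1 + Real.log N) ^ (b + 1)) := by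
        rw [zero_mul, add_zero]
        gcongr
        exact hsum N
    _ = A * B * (logWeight a N * (1 + Real.log N) ^ (b + 1)) := by ring

lemma summatory_mul_isLittleO {h g : ArithmeticFunction ℝ} {a b : ℕ}
    (hh : summatory h =o[atTop] logWeight a) (hg : summatory g =O[atTop] logWeight b)
    (hg0 : ∀ n, 0 ≤ g n) : summatory (h * g) =o[atTop] logWeight (a + b + 1) := by
  obtain ⟨B, _, hsum⟩ := exists_sum_div_le hg
  refine isLittleO_iff.2 fun ε hε => ?_
  obtain ⟨D, _, hle⟩ := exists_abs_le_mul_logWeight_add hh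
    (show 0 < ε / 2 / (B + 1) by positivity)
  have hgD : (fun N => D * summatory g N) =o[atTop] logWeight (a + b + 1) :=
    ((hg.trans_isLittleO (logWeight_isLittleO_succ b)).trans_isBigO
      (isBigO_logWeight_of_le (by omega))).const_mul_left D
  filter_upwards [hgD.def (half_pos hε)] with N hN
  rw [Real.norm_of_nonneg (logWeight_nonneg _ N)] at hN ⊢
  have hw := logWeight_nonneg a N
  have hmain : ε / 2 / (B + 1) * logWeight a N * (∑ m ∈ Finset.Ioc 0 N, g m / m)
      ≤ ε / 2 * logWeight (a + b + 1) N := by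
    rw [add_assoc, ← logWeight_mul_one_add_log_pow]
    have := one_add_log_natCast_pos N
    calc _ ≤ ε / 2 / (B + 1) * logWeight a N * ((B + 1) * (1 + Real.log N) ^ (b + 1)) := by
          gcongr
          exact (hsum N).trans (by gcongr; linarith)
      _ = _ := by field_simp
  calc ‖summatory (h * g) N‖ ≤ _ := abs_summatory_mul_le (by positivity) hle hg0 N
    _ ≤ ε / 2 * logWeight (a + b + 1) N + ε / 2 * logWeight (a + b + 1) N :=
        add_le_add hmain ((le_abs_self _).trans hN)
    _ = ε * logWeight (a + b + 1) N := by ring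

end Summatory

section LogMean

open Asymptotics ArithmeticFunction
open scoped ArithmeticFunction.zeta

/-- The arithmetic function `f` has the same summatory function as `c • ζ ^ (a + 1)` up to
`o(N log ^ a N)`. Comparing with Dirichlet powers of `ζ`, rather than with powers of `log`, turns
the convolution of mean values into an exact identity. -/
def HasLogMean (f : ArithmeticFunction ℝ) (c : ℝ) (a : ℕ) : Prop :=
  summatory (f - c • (ζ : ArithmeticFunction ℝ) ^ (a + 1)) =o[atTop] logWeight a

lemma mul_apply_nonneg {f g : ArithmeticFunction ℝ} (hf : ∀ n, 0 ≤ f n) (hg : ∀ n, 0 ≤ g n)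
    (n : ℕ) : 0 ≤ (f * g) n := by
  rw [mul_apply]
  exact Finset.sum_nonneg fun x _ => mul_nonneg (hf _) (hg _)

lemma zeta_apply_nonneg (n : ℕ) : 0 ≤ (ζ : ArithmeticFunction ℝ) n := by
  rw [natCoe_apply]
  exact Nat.cast_nonneg _

lemma zeta_pow_apply_nonneg (a n : ℕ) : 0 ≤ ((ζ : ArithmeticFunction ℝ) ^ (a + 1)) n := by
  induction a generalizing n with
  | zero => simpa only [zero_add, pow_one] using zeta_apply_nonneg n
  | succ a ih => exact pow_succ (ζ : ArithmeticFunction ℝ) (a + 1) ▸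
      mul_apply_nonneg ih zeta_apply_nonneg n

lemma summatory_zeta (N : ℕ) : summatory (ζ : ArithmeticFunction ℝ) N = N := by
  rw [summatory_apply, Finset.sum_congr rfl fun n hn =>
    show (ζ : ArithmeticFunction ℝ) n = 1 by simp [(Finset.mem_Ioc.1 hn).1.ne']]
  simp

lemma summatory_zeta_pow_isBigO (a : ℕ) :
    summatory ((ζ : ArithmeticFunction ℝ) ^ (a + 1)) =O[atTop] logWeight a := by
  have hzeta : summatory (ζ : ArithmeticFunction ℝ) =O[atTop] logWeight 0 :=
    .of_norm_le fun N => by simp [summatory_zeta, logWeight]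
  induction a with
  | zero => simpa only [zero_add, pow_one] using hzeta
  | succ a ih =>
    rw [pow_succ]
    exact summatory_mul_isBigO ih hzeta zeta_apply_nonneg

lemma logMul_zeta : logMul (ζ : ArithmeticFunction ℝ) = Λ * ζ := by
  rw [vonMangoldt_mul_zeta]
  ext n
  rcases eq_or_ne n 0 with rfl | hn
  · simp
  · simp [logMul_apply, log_apply, hn]

lemma logMul_zeta_pow (a : ℕ) :
    logMul ((ζ : ArithmeticFunction ℝ) ^ a) = (a : ℝ) • (Λ * ζ ^ a) := by
  induction a with
  | zero =>
    ext n
    rcases eq_or_ne n 1 with rfl | hn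
    · simp [logMul_apply]
    · simp [logMul_apply, one_apply_ne hn]
  | succ a ih =>
    rw [pow_succ, logMul_mul, ih, logMul_zeta, smul_mul_assoc, Nat.cast_succ, add_smul, one_smul]
    ring_nf

lemma hasLogMean_vonMangoldt : HasLogMean Λ 1 0 := by
  have hpsi : (fun N : ℕ => Chebyshev.psi N - N) =o[atTop] fun N : ℕ => (N : ℝ) := by
    have equiv : Chebyshev.psi ~[atTop] id :=
      (isEquivalent_iff_tendsto_one (eventually_ne_atTop 0)).2 primeNumberTheorem
    exact equiv.isLittleO.comp_tendsto tendsto_natCast_atTop_atTop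
  have hsum : summatory (Λ - (1 : ℝ) • (ζ : ArithmeticFunction ℝ) ^ (0 + 1))
      = fun N : ℕ => Chebyshev.psi N - N := by
    ext N
    rw [zero_add, pow_one, one_smul, map_sub, Pi.sub_apply, summatory_zeta, Chebyshev.psi,
      Nat.floor_natCast, summatory_apply]
  have hweight : logWeight 0 = fun N : ℕ => (N : ℝ) := by
    ext N
    simp [logWeight]
  rwa [HasLogMean, hsum, hweight]

lemma summatory_logMul_zeta_pow_sub_isLittleO (a : ℕ) :
    summatory (logMul ((ζ : ArithmeticFunction ℝ) ^ (a + 1)) - ((a : ℝ) + 1) • ζ ^ (a + 2))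
      =o[atTop] logWeight (a + 1) := by
  have hmul := summatory_mul_isLittleO hasLogMean_vonMangoldt (summatory_zeta_pow_isBigO a)
    (zeta_pow_apply_nonneg a)
  have hdecomp : logMul ((ζ : ArithmeticFunction ℝ) ^ (a + 1)) - ((a : ℝ) + 1) • ζ ^ (a + 2)
      = ((a : ℝ) + 1) •
        ((Λ - (1 : ℝ) • (ζ : ArithmeticFunction ℝ) ^ (0 + 1)) * ζ ^ (a + 1)) := by
    rw [logMul_zeta_pow, one_smul, sub_mul, ← pow_add, smul_sub, Nat.cast_succ,
      show 0 + 1 + (a + 1) = a + 2 by omega]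
  rw [hdecomp, map_smul]
  simpa only [zero_add] using hmul.const_smul_left ((a : ℝ) + 1)

namespace HasLogMean

variable {f g : ArithmeticFunction ℝ} {c d : ℝ} {a b : ℕ}

protected lemma isBigO (hf : HasLogMean f c a) : summatory f =O[atTop] logWeight a := by
  have hsum := (IsLittleO.isBigO hf).add ((summatory_zeta_pow_isBigO a).const_smul_left c)
  refine hsum.congr_left fun N => ?_
  rw [map_sub, map_smul, Pi.sub_apply, Pi.smul_apply, sub_add_cancel]

protected lemma add (hf : HasLogMean f c a) (hg : HasLogMean g d a) :
    HasLogMean (f + g) (c + d) a := by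
  rw [HasLogMean, add_smul, add_sub_add_comm, map_add]
  exact IsLittleO.add hf hg

protected lemma smul (hf : HasLogMean f c a) (r : ℝ) : HasLogMean (r • f) (r * c) a := by
  rw [HasLogMean, mul_smul, ← smul_sub, map_smul]
  exact IsLittleO.const_smul_left hf r

protected lemma sum {ι : Type*} {s : Finset ι} {f : ι → ArithmeticFunction ℝ} {c : ι → ℝ}
    (h : ∀ i ∈ s, HasLogMean (f i) (c i) a) : HasLogMean (∑ i ∈ s, f i) (∑ i ∈ s, c i) a := by
  rw [HasLogMean, Finset.sum_smul, ← Finset.sum_sub_distrib, map_sum]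
  convert IsLittleO.sum h using 1

protected lemma of_sub_isLittleO (hg : HasLogMean g c a)
    (h : summatory (f - g) =o[atTop] logWeight a) : HasLogMean f c a := by
  rw [HasLogMean, ← sub_add_sub_cancel f g, map_add]
  exact IsLittleO.add h hg

protected lemma mul (hf : HasLogMean f c a) (hg : HasLogMean g d b) (hg0 : ∀ n, 0 ≤ g n) :
    HasLogMean (f * g) (c * d) (a + b + 1) := by
  have hfg := summatory_mul_isLittleO hf hg.isBigO hg0
  have hgz := (summatory_mul_isLittleO hg (summatory_zeta_pow_isBigO a)
    (zeta_pow_apply_nonneg a)).const_smul_left c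
  rw [add_comm b a] at hgz
  have hdecomp : f * g - (c * d) • (ζ : ArithmeticFunction ℝ) ^ (a + b + 1 + 1)
      = (f - c • (ζ : ArithmeticFunction ℝ) ^ (a + 1)) * g
        + c • ((g - d • (ζ : ArithmeticFunction ℝ) ^ (b + 1)) * ζ ^ (a + 1)) := by
    rw [sub_mul, sub_mul, smul_sub, smul_mul_assoc, smul_mul_assoc, smul_smul, ← pow_add,
      mul_comm g, show b + 1 + (a + 1) = a + b + 1 + 1 by omega, sub_add_sub_cancel]
  rw [HasLogMean, hdecomp, map_add, map_smul]
  exact hfg.add hgz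

protected lemma logMul (hf : HasLogMean f c a) :
    HasLogMean (logMul f) (c * (a + 1)) (a + 1) := by
  have hzeta := (summatory_logMul_zeta_pow_sub_isLittleO a).const_smul_left c
  have hdecomp : logMul f - (c * (a + 1)) • (ζ : ArithmeticFunction ℝ) ^ (a + 1 + 1)
      = logMul (f - c • (ζ : ArithmeticFunction ℝ) ^ (a + 1))
        + c • (logMul ((ζ : ArithmeticFunction ℝ) ^ (a + 1)) - ((a : ℝ) + 1) • ζ ^ (a + 2)) := by
    rw [map_sub, map_smul, smul_sub, smul_smul, sub_add_sub_cancel]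
  rw [HasLogMean, hdecomp, map_add, map_smul]
  exact (summatory_logMul_isLittleO hf).add hzeta

end HasLogMean

lemma hasLogMean_logMul_pow_vonMangoldt (b : ℕ) :
    HasLogMean ((logMul ^ b) Λ) b.factorial b := by
  induction b with
  | zero => simpa using hasLogMean_vonMangoldt
  | succ b ih =>
    rw [pow_succ', Module.End.mul_apply, Nat.factorial_succ, Nat.cast_mul, mul_comm]
    exact_mod_cast ih.logMul

lemma logWeight_isBigO_mul_log_pow (a : ℕ) :
    logWeight a =O[atTop] fun N : ℕ => (N : ℝ) * Real.log N ^ a := by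
  have hone : (fun _ : ℕ => (1 : ℝ)) =O[atTop] fun N : ℕ => Real.log N :=
    (isLittleO_const_left_of_ne one_ne_zero).2
      (tendsto_norm_atTop_atTop.comp tendsto_log_natCast_atTop) |>.isBigO
  exact (isBigO_refl _ _).mul ((hone.add (isBigO_refl _ _)).pow a)

lemma summatory_zeta_pow_sub_isLittleO (a : ℕ) :
    (fun N : ℕ => summatory ((ζ : ArithmeticFunction ℝ) ^ (a + 1)) N
      - (a.factorial : ℝ)⁻¹ * (N * Real.log N ^ a)) =o[atTop] logWeight a := by
  induction a with
  | zero => simp [summatory_zeta]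
  | succ a ih =>
    have hlog := isLittleO_log_mul ih
    have hpartial := (isBigO_log_mul_summatory_sub_summatory_logMul
      (summatory_zeta_pow_isBigO a)).trans_isLittleO (logWeight_isLittleO_succ a)
    have hzeta := summatory_logMul_zeta_pow_sub_isLittleO a
    refine (((hlog.sub hpartial).sub hzeta).const_mul_left ((a : ℝ) + 1)⁻¹).congr_left fun N => ?_
    rw [map_sub, map_smul, Pi.sub_apply, Pi.smul_apply, smul_eq_mul, Nat.factorial_succ]
    push_cast
    field_simp
    ring

lemma HasLogMean.tendsto_summatory_div {f : ArithmeticFunction ℝ} {c : ℝ} {a : ℕ}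
    (hf : HasLogMean f c a) :
    Tendsto (fun N : ℕ => summatory f N / (N * Real.log N ^ a)) atTop (nhds (c / a.factorial)) := by
  have herr : (fun N : ℕ => summatory f N - c / a.factorial * (N * Real.log N ^ a))
      =o[atTop] fun N : ℕ => (N : ℝ) * Real.log N ^ a := by
    refine ((IsLittleO.add hf ((summatory_zeta_pow_sub_isLittleO a).const_mul_left c)).trans_isBigO
      (logWeight_isBigO_mul_log_pow a)).congr_left fun N => ?_
    rw [map_sub, map_smul, Pi.sub_apply, Pi.smul_apply, smul_eq_mul]
    ring
  have hlim := herr.tendsto_div_nhds_zero.add_const (c / a.factorial : ℝ)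
  rw [zero_add] at hlim
  refine hlim.congr' ?_
  filter_upwards [eventually_gt_atTop 0, tendsto_log_natCast_atTop.eventually_gt_atTop 0]
    with N hN hlog
  have : (N : ℝ) ≠ 0 := by exact_mod_cast hN.ne'
  field_simp
  ring

lemma tendsto_log_natFloor_div_log :
    Tendsto (fun X : ℝ => Real.log ⌊X⌋₊ / Real.log X) atTop (nhds 1) := by
  have hratio : Tendsto (fun X : ℝ => Real.log (⌊X⌋₊ / X)) atTop (nhds 0) := by
    simpa [Function.comp_def] using (Real.continuousAt_log one_ne_zero).tendsto.comp
      (tendsto_nat_floor_div_atTop (R := ℝ))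
  have hlim := (hratio.div_atTop Real.tendsto_log_atTop).add_const 1
  rw [zero_add] at hlim
  refine hlim.congr' ?_
  filter_upwards [eventually_gt_atTop 1] with X hX
  have hfloor : (0 : ℝ) < ⌊X⌋₊ := by exact_mod_cast Nat.floor_pos.2 hX.le
  have hlog := Real.log_pos hX
  rw [Real.log_div hfloor.ne' (by positivity)]
  field_simp
  ring

lemma HasLogMean.tendsto_summatory_natFloor_div {f : ArithmeticFunction ℝ} {c : ℝ} {a : ℕ}
    (hf : HasLogMean f c a) :
    Tendsto (fun X : ℝ => summatory f ⌊X⌋₊ / (X * Real.log X ^ a)) atTop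
      (nhds (c / a.factorial)) := by
  have hlim := ((hf.tendsto_summatory_div.comp tendsto_nat_floor_atTop).mul
    (tendsto_nat_floor_div_atTop (R := ℝ))).mul (tendsto_log_natFloor_div_log.pow a)
  rw [one_pow, mul_one, mul_one] at hlim
  refine hlim.congr' ?_
  filter_upwards [eventually_ge_atTop 2] with X hX
  have hfloor : (1 : ℝ) < ⌊X⌋₊ := by exact_mod_cast Nat.le_floor (by exact_mod_cast hX)
  have hlogFloor := Real.log_pos hfloor
  have hlog := Real.log_pos (show 1 < X by linarith)
  simp only [Function.comp_apply, div_pow]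
  field_simp

end LogMean

section HigherVonMangoldt

open ArithmeticFunction
open scoped ArithmeticFunction.zeta ArithmeticFunction.Moebius ArithmeticFunction.omega

/-- The function `Λ_j = μ * log ^ j` of `vmJ`, as an element of the Dirichlet ring. -/
noncomputable def higherVonMangoldt (j : ℕ) : ArithmeticFunction ℝ :=
  (μ : ArithmeticFunction ℝ) * (logMul ^ j) ζ

lemma higherVonMangoldt_apply (j n : ℕ) : higherVonMangoldt j n = vmJ j n := by
  rw [higherVonMangoldt, mul_apply,
    Nat.sum_divisorsAntidiagonal fun d e => (μ : ArithmeticFunction ℝ) d * (logMul ^ j) ζ e, vmJ]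
  refine Finset.sum_congr rfl fun d hd => ?_
  have hdvd := Nat.dvd_of_mem_divisors hd
  have hd0 : (d : ℝ) ≠ 0 := by exact_mod_cast (Nat.pos_of_mem_divisors hd).ne'
  have hquot : n / d ≠ 0 := (Nat.div_pos (Nat.divisor_le hd) (Nat.pos_of_mem_divisors hd)).ne'
  rw [logMul_pow_apply, natCoe_apply, zeta_apply_ne hquot, Nat.cast_one, mul_one, intCoe_apply,
    Nat.cast_div hdvd hd0]

lemma higherVonMangoldt_zero : higherVonMangoldt 0 = 1 := coe_moebius_mul_coe_zeta

lemma logMul_moebius : logMul (μ : ArithmeticFunction ℝ) = -(Λ * μ) := by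
  have hinv : (μ : ArithmeticFunction ℝ) * ζ = 1 := coe_moebius_mul_coe_zeta
  have hone : logMul (1 : ArithmeticFunction ℝ) = 0 := by simpa using logMul_zeta_pow 0
  have hleibniz := logMul_mul (μ : ArithmeticFunction ℝ) ζ
  rw [hinv, hone, logMul_zeta] at hleibniz
  linear_combination (-(μ : ArithmeticFunction ℝ)) * hleibniz
    - (logMul (μ : ArithmeticFunction ℝ) + Λ * μ) * hinv

lemma higherVonMangoldt_succ (j : ℕ) :
    higherVonMangoldt (j + 1) = logMul (higherVonMangoldt j) + Λ * higherVonMangoldt j := by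
  simp only [higherVonMangoldt, logMul_mul, logMul_moebius, pow_succ', Module.End.mul_apply]
  ring

lemma higherVonMangoldt_nonneg (j n : ℕ) : 0 ≤ higherVonMangoldt j n := by
  induction j generalizing n with
  | zero =>
    rw [higherVonMangoldt_zero, one_apply]
    positivity
  | succ j ih =>
    rw [higherVonMangoldt_succ, ArithmeticFunction.add_apply, logMul_apply]
    exact add_nonneg (mul_nonneg (Real.log_natCast_nonneg n) (ih n))
      (mul_apply_nonneg (fun _ => vonMangoldt_nonneg) ih n)

lemma higherVonMangoldt_succ_one (j : ℕ) : higherVonMangoldt (j + 1) 1 = 0 := by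
  simp [higherVonMangoldt_apply, vmJ]

lemma cardDistinctFactors_mul_le {m n : ℕ} (hm : m ≠ 0) (hn : n ≠ 0) : ω (m * n) ≤ ω m + ω n := by
  change (m * n).primeFactors.card ≤ m.primeFactors.card + n.primeFactors.card
  rw [Nat.primeFactors_mul hm hn]
  exact Finset.card_union_le _ _

lemma higherVonMangoldt_eq_zero_of_lt_cardDistinctFactors {j n : ℕ} (h : j < ω n) :
    higherVonMangoldt j n = 0 := by
  induction j generalizing n with
  | zero =>
    rw [higherVonMangoldt_zero, one_apply_ne]
    rintro rfl
    simp at h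
  | succ j ih =>
    rw [higherVonMangoldt_succ, ArithmeticFunction.add_apply, logMul_apply, ih (by omega), mul_zero,
      zero_add, mul_apply]
    refine Finset.sum_eq_zero fun x hx => ?_
    by_cases hq : IsPrimePow x.1
    · have hle := cardDistinctFactors_mul_le (Nat.left_ne_zero_of_mem_divisorsAntidiagonal hx)
        (Nat.right_ne_zero_of_mem_divisorsAntidiagonal hx)
      rw [(Nat.mem_divisorsAntidiagonal.1 hx).1, cardDistinctFactors_eq_one_iff.2 hq] at hle
      rw [ih (by omega), mul_zero]
    · rw [vonMangoldt_eq_zero_iff.2 hq, zero_mul]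

lemma sum_divisors_higherVonMangoldt (j : ℕ) {n : ℕ} (hn : n ≠ 0) :
    ∑ d ∈ n.divisors, higherVonMangoldt j d = Real.log n ^ j := by
  have hmul : higherVonMangoldt j * ζ = (logMul ^ j) ζ := by
    rw [higherVonMangoldt, mul_right_comm, coe_moebius_mul_coe_zeta, one_mul]
  rw [← coe_mul_zeta_apply, hmul, logMul_pow_apply, natCoe_apply, zeta_apply_ne hn, Nat.cast_one,
    mul_one]

lemma higherVonMangoldt_le_log_pow (j : ℕ) {n : ℕ} (hn : n ≠ 0) :
    higherVonMangoldt j n ≤ Real.log n ^ j := by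
  rw [← sum_divisors_higherVonMangoldt j hn]
  exact Finset.single_le_sum (fun d _ => higherVonMangoldt_nonneg j d) (Nat.mem_divisors_self n hn)

lemma higherVonMangoldt_succ_apply_prime (j : ℕ) {p : ℕ} (hp : p.Prime) :
    higherVonMangoldt (j + 1) p = Real.log p ^ (j + 1) := by
  rw [← sum_divisors_higherVonMangoldt (j + 1) hp.ne_zero, hp.sum_divisors,
    higherVonMangoldt_succ_one, add_zero]

lemma div_natCast_ne_zero {n d : ℕ} (hd : d ∈ n.divisors) : (n : ℝ) / d ≠ 0 :=
  div_ne_zero (Nat.cast_ne_zero.2 (Nat.ne_zero_of_mem_divisors hd))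
    (Nat.cast_ne_zero.2 (Nat.pos_of_mem_divisors hd).ne')

lemma higherVonMangoldt_mul_of_coprime (k : ℕ) {q m : ℕ} (h : q.Coprime m) :
    higherVonMangoldt k (q * m) = ∑ t ∈ Finset.range (k + 1),
      k.choose t * higherVonMangoldt (k - t) q * higherVonMangoldt t m := by
  have hterm : ∀ x ∈ q.divisors ×ˢ m.divisors,
      μ (x.1 * x.2) * Real.log ((q * m : ℕ) / (x.1 * x.2 : ℕ)) ^ k
        = ∑ t ∈ Finset.range (k + 1), k.choose t *
            ((μ x.1 * Real.log (q / x.1) ^ (k - t)) * (μ x.2 * Real.log (m / x.2) ^ t)) := by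
    intro x hx
    obtain ⟨hq, hm⟩ := Finset.mem_product.1 hx
    have hcop : x.1.Coprime x.2 :=
      h.of_dvd (Nat.dvd_of_mem_divisors hq) (Nat.dvd_of_mem_divisors hm)
    rw [isMultiplicative_moebius.map_mul_of_coprime hcop, Nat.cast_mul, Nat.cast_mul,
      mul_div_mul_comm, Real.log_mul (div_natCast_ne_zero hq) (div_natCast_ne_zero hm), add_comm,
      add_pow, Finset.mul_sum, Int.cast_mul]
    exact Finset.sum_congr rfl fun t _ => by ring
  simp only [higherVonMangoldt_apply, vmJ]
  rw [Nat.divisors_mul, Finset.mul_def, Finset.sum_image h.mul_injOn_divisors,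
    Finset.sum_congr rfl hterm, Finset.sum_comm]
  simp only [mul_assoc, Finset.sum_mul_sum, ← Finset.mul_sum, Finset.sum_product]

lemma higherVonMangoldt_mul_of_dvd_pow (k : ℕ) {q m e : ℕ} (hq : q ≠ 0) (hm : m ≠ 0)
    (h : q ∣ m ^ e) :
    higherVonMangoldt k (q * m) = ∑ t ∈ Finset.range (k + 1),
      k.choose t * Real.log q ^ (k - t) * higherVonMangoldt t m := by
  have hsub : m.divisors ⊆ (q * m).divisors :=
    Nat.divisors_subset_of_dvd (mul_ne_zero hq hm) (dvd_mul_left m q)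
  have hnew : ∀ d ∈ (q * m).divisors, d ∉ m.divisors →
      (μ d : ℝ) * Real.log ((q * m : ℕ) / d) ^ k = 0 := by
    intro d hd hdm
    have hsq : ¬ Squarefree d := by
      intro hsq
      have hpow : d ∣ m ^ (e + 1) :=
        (Nat.dvd_of_mem_divisors hd).trans (pow_succ m e ▸ mul_dvd_mul_right h m)
      exact hdm (Nat.mem_divisors.2 ⟨(hsq.dvd_pow_iff_dvd e.succ_ne_zero).1 hpow, hm⟩)
    rw [moebius_eq_zero_of_not_squarefree hsq, Int.cast_zero, zero_mul]
  have hterm : ∀ d ∈ m.divisors, (μ d : ℝ) * Real.log ((q * m : ℕ) / d) ^ k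
      = ∑ t ∈ Finset.range (k + 1),
          k.choose t * Real.log q ^ (k - t) * (μ d * Real.log (m / d) ^ t) := by
    intro d hd
    rw [Nat.cast_mul, mul_div_assoc, Real.log_mul (by exact_mod_cast hq) (div_natCast_ne_zero hd),
      add_comm, add_pow, Finset.mul_sum]
    exact Finset.sum_congr rfl fun t _ => by ring
  simp only [higherVonMangoldt_apply, vmJ]
  rw [← Finset.sum_subset hsub hnew, Finset.sum_congr rfl hterm, Finset.sum_comm]
  simp only [← Finset.mul_sum]

/-- The increment `P(r) - P(0)` of the polynomial `P(r) = ∑_{d ∣ m} μ(d) (r + log (m / d)) ^ k`,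
expanded by the binomial theorem. At `r = log q` it is `Λ_k (q m)` for a prime `q` not dividing
`m`. -/
noncomputable def vonMangoldtIncrement (k : ℕ) (r : ℝ) (m : ℕ) : ℝ :=
  ∑ t ∈ Finset.range k, k.choose t * r ^ (k - t) * higherVonMangoldt t m

lemma vonMangoldtIncrement_nonneg (k : ℕ) {r : ℝ} (hr : 0 ≤ r) (m : ℕ) :
    0 ≤ vonMangoldtIncrement k r m :=
  Finset.sum_nonneg fun t _ => mul_nonneg (by positivity) (higherVonMangoldt_nonneg t m)

lemma higherVonMangoldt_mul_of_coprime_of_ne_one (k : ℕ) {q m : ℕ} (hq : q ≠ 1) (h : q.Coprime m) :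
    higherVonMangoldt k (q * m) = ∑ t ∈ Finset.range k,
      k.choose t * higherVonMangoldt (k - t) q * higherVonMangoldt t m := by
  rw [higherVonMangoldt_mul_of_coprime k h, Finset.sum_range_succ, Nat.sub_self,
    higherVonMangoldt_zero, one_apply_ne hq, mul_zero, zero_mul, add_zero]

lemma abs_higherVonMangoldt_mul_sub_le_of_coprime (k : ℕ) {q m : ℕ} (hq : IsPrimePow q)
    (h : q.Coprime m) :
    |higherVonMangoldt k (q * m) - vonMangoldtIncrement k (Real.log q) m|
      ≤ if q.Prime then 0 else vonMangoldtIncrement k (Real.log q) m := by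
  have hle : higherVonMangoldt k (q * m) ≤ vonMangoldtIncrement k (Real.log q) m := by
    rw [higherVonMangoldt_mul_of_coprime_of_ne_one k hq.ne_one h, vonMangoldtIncrement]
    gcongr with t
    · exact higherVonMangoldt_nonneg t m
    · exact higherVonMangoldt_le_log_pow _ hq.ne_zero
  have h0 := higherVonMangoldt_nonneg k (q * m)
  split_ifs with hp
  · rw [abs_nonpos_iff, sub_eq_zero, higherVonMangoldt_mul_of_coprime_of_ne_one k hq.ne_one h]
    refine Finset.sum_congr rfl fun t ht => ?_
    obtain ⟨s, hs⟩ := Nat.exists_eq_add_of_lt (Finset.mem_range.1 ht)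
    rw [show k - t = s + 1 by omega, higherVonMangoldt_succ_apply_prime s hp]
  · rw [abs_sub_comm, abs_of_nonneg (sub_nonneg.2 hle)]
    linarith

lemma higherVonMangoldt_mul_of_not_coprime (k : ℕ) {q m : ℕ} (hq : IsPrimePow q) (hm : m ≠ 0)
    (h : ¬ q.Coprime m) :
    higherVonMangoldt k (q * m)
      = vonMangoldtIncrement k (Real.log q) m + higherVonMangoldt k m := by
  obtain ⟨p, e, hp, he, rfl⟩ := (isPrimePow_nat_iff q).1 hq
  have hpm : p ∣ m := by
    rwa [Nat.coprime_pow_left_iff he, hp.coprime_iff_not_dvd, not_not] at h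
  rw [higherVonMangoldt_mul_of_dvd_pow k hq.ne_zero hm (pow_dvd_pow_of_dvd hpm e),
    Finset.sum_range_succ, Nat.choose_self, Nat.sub_self, pow_zero, Nat.cast_one, one_mul, one_mul,
    vonMangoldtIncrement]

lemma abs_higherVonMangoldt_mul_sub_le (k : ℕ) {q m : ℕ} (hq : IsPrimePow q) (hm : m ≠ 0) :
    |higherVonMangoldt k (q * m) - vonMangoldtIncrement k (Real.log q) m|
      ≤ (if q.Coprime m then 0 else higherVonMangoldt k m)
        + (if q.Prime then 0 else vonMangoldtIncrement k (Real.log q) m) := by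
  by_cases h : q.Coprime m
  · rw [if_pos h, zero_add]
    exact abs_higherVonMangoldt_mul_sub_le_of_coprime k hq h
  · rw [if_neg h, higherVonMangoldt_mul_of_not_coprime k hq hm h, add_sub_cancel_left,
      abs_of_nonneg (higherVonMangoldt_nonneg k m)]
    have := vonMangoldtIncrement_nonneg k (Real.log_natCast_nonneg q) m
    split_ifs <;> linarith

end HigherVonMangoldt

section Recursion

open Asymptotics ArithmeticFunction
open scoped ArithmeticFunction.omega

/-- The part of `Λ` supported on proper prime powers. -/
noncomputable def nonprimeVonMangoldt : ArithmeticFunction ℝ :=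
  ⟨fun n => if n.Prime then 0 else Λ n, by simp⟩

lemma nonprimeVonMangoldt_apply (n : ℕ) :
    nonprimeVonMangoldt n = if n.Prime then 0 else Λ n := rfl

lemma summatory_nonprimeVonMangoldt (N : ℕ) :
    summatory nonprimeVonMangoldt N = Chebyshev.psi N - Chebyshev.theta N := by
  rw [Chebyshev.psi_sub_theta_eq_sum_not_prime, Nat.floor_natCast, Finset.sum_filter,
    summatory_apply]
  simp only [nonprimeVonMangoldt_apply, ite_not]

lemma summatory_logMul_pow_nonprimeVonMangoldt_isLittleO (b : ℕ) :
    summatory ((logMul ^ b) nonprimeVonMangoldt) =o[atTop] logWeight b := by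
  induction b with
  | zero =>
    have hsqrt : Real.sqrt =o[atTop] (id : ℝ → ℝ) := by
      have hone : (fun _ : ℝ => (1 : ℝ)) =o[atTop] Real.sqrt :=
        (isLittleO_const_left_of_ne one_ne_zero).2
          (tendsto_norm_atTop_atTop.comp Real.tendsto_sqrt_atTop)
      refine (hone.mul_isBigO (isBigO_refl Real.sqrt atTop)).congr' (by simp) ?_
      filter_upwards [eventually_ge_atTop 0] with x hx using Real.mul_self_sqrt hx
    refine ((Chebyshev.isBigO_psi_sub_theta_sqrt.trans_isLittleO hsqrt).comp_tendsto
      tendsto_natCast_atTop_atTop).congr (fun N => ?_) fun N => ?_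
    · simp [summatory_nonprimeVonMangoldt]
    · simp [logWeight]
  | succ b ih =>
    rw [pow_succ', Module.End.mul_apply]
    exact summatory_logMul_isLittleO ih

/-- The pointwise product `Λ_j Λ_k`, whose mean value is to be found. -/
noncomputable def vonMangoldtProduct (j k : ℕ) : ArithmeticFunction ℝ :=
  (higherVonMangoldt j).pmul (higherVonMangoldt k)

lemma vonMangoldtProduct_apply (j k n : ℕ) :
    vonMangoldtProduct j k n = higherVonMangoldt j n * higherVonMangoldt k n := rfl

lemma vonMangoldtProduct_nonneg (j k n : ℕ) : 0 ≤ vonMangoldtProduct j k n :=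
  mul_nonneg (higherVonMangoldt_nonneg j n) (higherVonMangoldt_nonneg k n)

lemma vonMangoldtProduct_comm (j k : ℕ) : vonMangoldtProduct j k = vonMangoldtProduct k j :=
  pmul_comm _ _

lemma vonMangoldtProduct_zero_zero : vonMangoldtProduct 0 0 = 1 := by
  ext n
  rcases eq_or_ne n 1 with rfl | hn
  · simp [vonMangoldtProduct_apply, higherVonMangoldt_zero]
  · simp [vonMangoldtProduct_apply, higherVonMangoldt_zero, hn]

lemma vonMangoldtProduct_succ_zero (j : ℕ) : vonMangoldtProduct (j + 1) 0 = 0 := by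
  ext n
  rcases eq_or_ne n 1 with rfl | hn
  · simp [vonMangoldtProduct_apply, higherVonMangoldt_succ_one]
  · simp [vonMangoldtProduct_apply, higherVonMangoldt_zero, hn]

/-- The part of the Dirichlet convolution `Λ * f` coming from non-coprime factorizations. -/
noncomputable def noncoprimeVonMangoldtMul (f : ArithmeticFunction ℝ) : ArithmeticFunction ℝ :=
  ⟨fun n => ∑ x ∈ n.divisorsAntidiagonal, if x.1.Coprime x.2 then 0 else Λ x.1 * f x.2, by simp⟩

lemma noncoprimeVonMangoldtMul_apply (f : ArithmeticFunction ℝ) (n : ℕ) :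
    noncoprimeVonMangoldtMul f n
      = ∑ x ∈ n.divisorsAntidiagonal, if x.1.Coprime x.2 then 0 else Λ x.1 * f x.2 := rfl

lemma sum_Ioc_sum_divisorsAntidiagonal {M : Type*} [AddCommMonoid M] (F : ℕ → ℕ → M) (N : ℕ) :
    ∑ n ∈ Finset.Ioc 0 N, ∑ x ∈ n.divisorsAntidiagonal, F x.1 x.2
      = ∑ m ∈ Finset.Ioc 0 N, ∑ q ∈ Finset.Ioc 0 (N / m), F q m := by
  have hpairs : ∑ n ∈ Finset.Ioc 0 N, ∑ x ∈ n.divisorsAntidiagonal, F x.1 x.2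
      = ∑ x ∈ Finset.Ioc 0 N ×ˢ Finset.Ioc 0 N with x.1 * x.2 ≤ N, F x.1 x.2 := by
    rw [Finset.sum_congr rfl fun n hn => by
      rw [Nat.divisorsAntidiagonal_eq_prod_filter_of_le (Finset.mem_Ioc.1 hn).1.ne'
        (Finset.mem_Ioc.1 hn).2]]
    simp_rw [Finset.sum_filter]
    rw [Finset.sum_comm]
    exact Finset.sum_congr rfl fun _ _ => by simp_all
  rw [hpairs, Finset.sum_filter, Finset.sum_product_right]
  refine Finset.sum_congr rfl fun m hm => ?_
  rw [← Finset.sum_filter]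
  refine Finset.sum_congr (Finset.ext fun q => ?_) fun _ _ => rfl
  have hm0 := (Finset.mem_Ioc.1 hm).1
  simp only [Finset.mem_filter, Finset.mem_Ioc, Nat.le_div_iff_mul_le hm0]
  exact ⟨fun h => ⟨h.1.1, h.2⟩, fun h => ⟨⟨h.1, (Nat.le_mul_of_pos_right q hm0).trans h.2⟩, h.2⟩⟩

lemma sum_vonMangoldt_dvd_le {p Y : ℕ} (hp : p.Prime) (hY : Y ≠ 0) :
    ∑ q ∈ Finset.Ioc 0 Y with p ∣ q, Λ q ≤ Real.log Y := by
  have hsub : {q ∈ {q ∈ Finset.Ioc 0 Y | p ∣ q} | Λ q ≠ 0} ⊆ (p ^ Nat.log p Y).divisors := by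
    intro q hq
    simp only [Finset.mem_filter, Finset.mem_Ioc, vonMangoldt_ne_zero_iff] at hq
    obtain ⟨⟨⟨-, hqY⟩, hpq⟩, hpow⟩ := hq
    obtain ⟨r, e, hr, -, rfl⟩ := (isPrimePow_nat_iff q).1 hpow
    obtain rfl := (Nat.prime_dvd_prime_iff_eq hp hr).1 (hp.dvd_of_dvd_pow hpq)
    exact Nat.mem_divisors.2 ⟨pow_dvd_pow p (Nat.le_log_of_pow_le hp.one_lt hqY),
      pow_ne_zero _ hp.ne_zero⟩
  calc ∑ q ∈ Finset.Ioc 0 Y with p ∣ q, Λ q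
      ≤ ∑ q ∈ (p ^ Nat.log p Y).divisors, Λ q := by
        rw [← Finset.sum_filter_ne_zero]
        exact Finset.sum_le_sum_of_subset_of_nonneg hsub fun _ _ _ => vonMangoldt_nonneg
    _ = Real.log (p ^ Nat.log p Y : ℕ) := vonMangoldt_sum
    _ ≤ Real.log Y := log_natCast_le_log_natCast (Nat.pow_log_le_self p hY)

lemma sum_vonMangoldt_not_coprime_le {m Y : ℕ} (hm : m ≠ 0) (hY : Y ≠ 0) :
    ∑ q ∈ Finset.Ioc 0 Y with ¬ q.Coprime m, Λ q ≤ ω m * Real.log Y := by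
  have hterm : ∀ q, (if ¬ q.Coprime m then Λ q else 0)
      ≤ ∑ p ∈ m.primeFactors, if p ∣ q then Λ q else 0 := by
    intro q
    have hnonneg : ∀ p ∈ m.primeFactors, 0 ≤ if p ∣ q then Λ q else 0 := fun p _ => by
      split_ifs <;> simp [vonMangoldt_nonneg]
    split_ifs with h
    · exact Finset.sum_nonneg hnonneg
    · obtain ⟨p, hp, hpq, hpm⟩ := Nat.Prime.not_coprime_iff_dvd.1 h
      simpa only [if_pos hpq] using
        Finset.single_le_sum hnonneg (Nat.mem_primeFactors.2 ⟨hp, hpm, hm⟩)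
  calc ∑ q ∈ Finset.Ioc 0 Y with ¬ q.Coprime m, Λ q
      ≤ ∑ p ∈ m.primeFactors, ∑ q ∈ Finset.Ioc 0 Y with p ∣ q, Λ q := by
        simp only [Finset.sum_filter]
        rw [Finset.sum_comm]
        exact Finset.sum_le_sum fun q _ => hterm q
    _ ≤ ∑ _p ∈ m.primeFactors, Real.log Y :=
        Finset.sum_le_sum fun p hp => sum_vonMangoldt_dvd_le (Nat.prime_of_mem_primeFactors hp) hY
    _ = ω m * Real.log Y := by
        rw [Finset.sum_const, nsmul_eq_mul]
        rfl

section Noncoprime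

variable {f : ArithmeticFunction ℝ} {j : ℕ}

lemma noncoprimeVonMangoldtMul_nonneg (hf0 : ∀ n, 0 ≤ f n) (n : ℕ) :
    0 ≤ noncoprimeVonMangoldtMul f n := by
  rw [noncoprimeVonMangoldtMul_apply]
  refine Finset.sum_nonneg fun x _ => ?_
  split_ifs
  · exact le_rfl
  · exact mul_nonneg vonMangoldt_nonneg (hf0 _)

lemma summatory_noncoprimeVonMangoldtMul_le (hf0 : ∀ n, 0 ≤ f n) (hf : ∀ n, j < ω n → f n = 0)
    (N : ℕ) :
    summatory (noncoprimeVonMangoldtMul f) N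
      ≤ j * (Real.log N * summatory f N - summatory (logMul f) N) := by
  simp only [summatory_apply, noncoprimeVonMangoldtMul_apply, logMul_apply]
  rw [sum_Ioc_sum_divisorsAntidiagonal fun q m => if q.Coprime m then 0 else Λ q * f m,
    Finset.mul_sum, ← Finset.sum_sub_distrib, Finset.mul_sum]
  refine Finset.sum_le_sum fun m hm => ?_
  obtain ⟨hm0, hmN⟩ := Finset.mem_Ioc.1 hm
  have hquot : N / m ≠ 0 := (Nat.div_pos hmN hm0).ne'
  have hN0 : 0 < N := hm0.trans_le hmN
  have hlog : Real.log (N / m : ℕ) ≤ Real.log N - Real.log m := by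
    rw [← Real.log_div (by positivity) (by positivity)]
    exact Real.log_le_log (by exact_mod_cast hquot.bot_lt) Nat.cast_div_le
  calc ∑ q ∈ Finset.Ioc 0 (N / m), (if q.Coprime m then 0 else Λ q * f m)
      = (∑ q ∈ Finset.Ioc 0 (N / m) with ¬ q.Coprime m, Λ q) * f m := by
        rw [Finset.sum_filter, Finset.sum_mul]
        exact Finset.sum_congr rfl fun q _ => by split_ifs <;> simp_all
    _ ≤ ω m * Real.log (N / m : ℕ) * f m :=
        mul_le_mul_of_nonneg_right (sum_vonMangoldt_not_coprime_le hm0.ne' hquot) (hf0 m)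
    _ ≤ j * (Real.log N - Real.log m) * f m := by
        rcases lt_or_ge j (ω m) with hlt | hle
        · rw [hf m hlt, mul_zero, mul_zero]
        · have := hf0 m
          gcongr
    _ = j * (Real.log N * f m - Real.log m * f m) := by ring

lemma summatory_noncoprimeVonMangoldtMul_isBigO {a : ℕ} (hf0 : ∀ n, 0 ≤ f n)
    (hf : ∀ n, j < ω n → f n = 0) (hfa : summatory f =O[atTop] logWeight a) :
    summatory (noncoprimeVonMangoldtMul f) =O[atTop] logWeight a := by
  refine IsBigO.trans (.of_norm_le fun N => ?_)
    ((isBigO_log_mul_summatory_sub_summatory_logMul hfa).const_mul_left (j : ℝ))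
  rw [summatory_apply, Real.norm_of_nonneg
    (Finset.sum_nonneg fun n _ => noncoprimeVonMangoldtMul_nonneg hf0 n)]
  exact summatory_noncoprimeVonMangoldtMul_le hf0 hf N

end Noncoprime

/-- The convolution of `h` with the increment of `Λ_k`, weighted by `Λ_j`: its value at `n` is
`∑_{q m = n} h(q) Λ_j(m) G_k(log q, m)` with `G_k` the function `vonMangoldtIncrement k`. -/
noncomputable def incrementMul (h : ArithmeticFunction ℝ) (j k : ℕ) : ArithmeticFunction ℝ :=
  ∑ t ∈ Finset.range k, (k.choose t : ℝ) • ((logMul ^ (k - t)) h * vonMangoldtProduct j t)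

lemma arithmeticFunction_sum_apply {ι : Type*} (s : Finset ι) (f : ι → ArithmeticFunction ℝ)
    (n : ℕ) : (∑ i ∈ s, f i) n = ∑ i ∈ s, f i n := by
  induction s using Finset.cons_induction with
  | empty => simp
  | cons i s hi ih => rw [Finset.sum_cons, Finset.sum_cons, ArithmeticFunction.add_apply, ih]

lemma incrementMul_apply (h : ArithmeticFunction ℝ) (j k n : ℕ) :
    incrementMul h j k n = ∑ x ∈ n.divisorsAntidiagonal,
      h x.1 * higherVonMangoldt j x.2 * vonMangoldtIncrement k (Real.log x.1) x.2 := by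
  rw [incrementMul, arithmeticFunction_sum_apply]
  simp only [smul_map, mul_apply, logMul_pow_apply, vonMangoldtProduct_apply, smul_eq_mul,
    vonMangoldtIncrement, Finset.mul_sum]
  rw [Finset.sum_comm]
  exact Finset.sum_congr rfl fun x _ => Finset.sum_congr rfl fun t _ => by ring

lemma vonMangoldtProduct_succ_apply (j k n : ℕ) :
    vonMangoldtProduct (j + 1) k n = logMul (vonMangoldtProduct j k) n
      + ∑ x ∈ n.divisorsAntidiagonal,
          Λ x.1 * higherVonMangoldt j x.2 * higherVonMangoldt k (x.1 * x.2) := by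
  rw [vonMangoldtProduct_apply, higherVonMangoldt_succ, ArithmeticFunction.add_apply, logMul_apply,
    logMul_apply, vonMangoldtProduct_apply, mul_apply, add_mul, Finset.sum_mul, mul_assoc]
  congr 1
  exact Finset.sum_congr rfl fun x hx => by rw [(Nat.mem_divisorsAntidiagonal.1 hx).1]

lemma abs_vonMangoldtProduct_succ_sub_le (j k n : ℕ) :
    |(vonMangoldtProduct (j + 1) k - (logMul (vonMangoldtProduct j k) + incrementMul Λ j k)) n|
      ≤ (noncoprimeVonMangoldtMul (vonMangoldtProduct j k)
          + incrementMul nonprimeVonMangoldt j k) n := by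
  rw [sub_eq_add_neg, ArithmeticFunction.add_apply, ArithmeticFunction.neg_apply, ← sub_eq_add_neg,
    ArithmeticFunction.add_apply, ArithmeticFunction.add_apply,
    vonMangoldtProduct_succ_apply, add_sub_add_left_eq_sub, incrementMul_apply, incrementMul_apply,
    noncoprimeVonMangoldtMul_apply, ← Finset.sum_sub_distrib, ← Finset.sum_add_distrib]
  refine (Finset.abs_sum_le_sum_abs _ _).trans (Finset.sum_le_sum fun x hx => ?_)
  by_cases hq : IsPrimePow x.1
  · have hkey := abs_higherVonMangoldt_mul_sub_le k hq
      (Nat.right_ne_zero_of_mem_divisorsAntidiagonal hx)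
    have hweight : 0 ≤ Λ x.1 * higherVonMangoldt j x.2 :=
      mul_nonneg vonMangoldt_nonneg (higherVonMangoldt_nonneg j x.2)
    rw [← mul_sub, abs_mul, abs_of_nonneg hweight]
    refine (mul_le_mul_of_nonneg_left hkey hweight).trans_eq ?_
    rw [nonprimeVonMangoldt_apply, vonMangoldtProduct_apply]
    split_ifs <;> ring
  · simp [vonMangoldt_eq_zero_iff.2 hq, nonprimeVonMangoldt_apply]

lemma incrementMul_zero_succ (h : ArithmeticFunction ℝ) (l : ℕ) :
    incrementMul h 0 (l + 1) = (logMul ^ (l + 1)) h := by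
  rw [incrementMul, Finset.sum_range_succ', Finset.sum_eq_zero fun t _ => by
    rw [vonMangoldtProduct_comm, vonMangoldtProduct_succ_zero, mul_zero, smul_zero]]
  simp [vonMangoldtProduct_zero_zero]

lemma incrementMul_succ_succ (h : ArithmeticFunction ℝ) (i l : ℕ) :
    incrementMul h (i + 1) (l + 1) = ∑ s ∈ Finset.range l,
      ((l + 1).choose (s + 1) : ℝ) •
        ((logMul ^ (l - s)) h * vonMangoldtProduct (i + 1) (s + 1)) := by
  rw [incrementMul, Finset.sum_range_succ', vonMangoldtProduct_succ_zero, mul_zero, smul_zero,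
    add_zero]
  simp only [Nat.add_sub_add_right]

lemma HasLogMean.vonMangoldtProduct_succ {j k a : ℕ} {c : ℝ}
    (hbound : summatory (vonMangoldtProduct j k) =O[atTop] logWeight a)
    (hmain : HasLogMean (logMul (vonMangoldtProduct j k) + incrementMul Λ j k) c (a + 1))
    (herr : summatory (incrementMul nonprimeVonMangoldt j k) =o[atTop] logWeight (a + 1)) :
    HasLogMean (vonMangoldtProduct (j + 1) k) c (a + 1) := by
  refine hmain.of_sub_isLittleO ((summatory_isBigO_of_abs_le fun n _ =>
    abs_vonMangoldtProduct_succ_sub_le j k n).trans_isLittleO ?_)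
  have hnoncoprime := summatory_noncoprimeVonMangoldtMul_isBigO (j := j)
    (vonMangoldtProduct_nonneg j k) (fun n hn => by
      rw [vonMangoldtProduct_apply, higherVonMangoldt_eq_zero_of_lt_cardDistinctFactors hn,
        zero_mul]) hbound
  rw [map_add]
  exact (hnoncoprime.trans_isLittleO (logWeight_isLittleO_succ a)).add herr

lemma hasLogMean_vonMangoldtProduct_one_succ (l : ℕ) :
    HasLogMean (vonMangoldtProduct 1 (l + 1)) (l + 1).factorial (l + 1) := by
  have hzero : vonMangoldtProduct 0 (l + 1) = 0 := by
    rw [vonMangoldtProduct_comm, vonMangoldtProduct_succ_zero]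
  refine HasLogMean.vonMangoldtProduct_succ ?_ ?_ ?_
  · rw [hzero, _root_.map_zero]
    exact isBigO_zero _ _
  · rw [hzero, _root_.map_zero, zero_add, incrementMul_zero_succ]
    exact hasLogMean_logMul_pow_vonMangoldt (l + 1)
  · rw [incrementMul_zero_succ]
    exact summatory_logMul_pow_nonprimeVonMangoldt_isLittleO (l + 1)

lemma summatory_incrementMul_nonprimeVonMangoldt_isLittleO {i : ℕ}
    (hf : ∀ s, summatory (vonMangoldtProduct (i + 1) (s + 1)) =O[atTop] logWeight (i + s + 1))
    (l : ℕ) :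
    summatory (incrementMul nonprimeVonMangoldt (i + 1) (l + 1)) =o[atTop]
      logWeight (i + l + 2) := by
  rw [incrementMul_succ_succ, map_sum]
  convert IsLittleO.sum (s := Finset.range l) fun s hs => ?_ using 1
  have hsl := Finset.mem_range.1 hs
  have hmul := summatory_mul_isLittleO (summatory_logMul_pow_nonprimeVonMangoldt_isLittleO (l - s))
    (hf s) (vonMangoldtProduct_nonneg (i + 1) (s + 1))
  rw [map_smul, show i + l + 2 = l - s + (i + s + 1) + 1 by omega]
  exact hmul.const_smul_left _

lemma hasLogMean_incrementMul_vonMangoldt {i : ℕ} {c : ℕ → ℝ}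
    (hf : ∀ s, HasLogMean (vonMangoldtProduct (i + 1) (s + 1)) (c s) (i + s + 1)) (l : ℕ) :
    HasLogMean (incrementMul Λ (i + 1) (l + 1))
      (∑ s ∈ Finset.range l, (l + 1).choose (s + 1) * ((l - s).factorial * c s)) (i + l + 2) := by
  rw [incrementMul_succ_succ]
  refine HasLogMean.sum fun s hs => HasLogMean.smul ?_ _
  have hsl := Finset.mem_range.1 hs
  rw [show i + l + 2 = l - s + (i + s + 1) + 1 by omega]
  exact (hasLogMean_logMul_pow_vonMangoldt (l - s)).mul (hf s)
    (vonMangoldtProduct_nonneg (i + 1) (s + 1))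

lemma sum_range_factorial_add_div_factorial (i l : ℕ) :
    ∑ s ∈ Finset.range l, ((i : ℝ) + 1) * ((i + s).factorial / s.factorial)
      = l * ((i + l).factorial / l.factorial) := by
  induction l with
  | zero => simp
  | succ l ih =>
    rw [Finset.sum_range_succ, ih, ← add_assoc, Nat.factorial_succ, Nat.factorial_succ]
    push_cast
    field_simp
    ring

lemma sum_range_choose_mul_factorial (i l : ℕ) :
    ∑ s ∈ Finset.range l, ((l + 1).choose (s + 1) : ℝ)
        * ((l - s).factorial * (((i : ℝ) + 1) * (s + 1) * (i + s).factorial))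
      = (l + 1) * l * (i + l).factorial := by
  have hterm : ∀ s ∈ Finset.range l, ((l + 1).choose (s + 1) : ℝ)
        * ((l - s).factorial * (((i : ℝ) + 1) * (s + 1) * (i + s).factorial))
      = (l + 1).factorial * (((i : ℝ) + 1) * ((i + s).factorial / s.factorial)) := by
    intro s hs
    have hsl := Finset.mem_range.1 hs
    have hchoose : ((l + 1).choose (s + 1) : ℝ) * (s + 1).factorial * (l - s).factorial
        = (l + 1).factorial := by
      have := Nat.choose_mul_factorial_mul_factorial (show s + 1 ≤ l + 1 by omega)
      rw [Nat.add_sub_add_right] at this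
      exact_mod_cast this
    rw [← hchoose, Nat.factorial_succ]
    push_cast
    field_simp
  rw [Finset.sum_congr rfl hterm, ← Finset.mul_sum, sum_range_factorial_add_div_factorial,
    Nat.factorial_succ]
  push_cast
  field_simp

theorem hasLogMean_vonMangoldtProduct (i l : ℕ) :
    HasLogMean (vonMangoldtProduct (i + 1) (l + 1))
      (((i : ℝ) + 1) * (l + 1) * (i + l).factorial) (i + l + 1) := by
  induction i generalizing l with
  | zero =>
    have hconst : (((0 : ℕ) : ℝ) + 1) * (l + 1) * (0 + l).factorial = (l + 1).factorial := by
      rw [zero_add l, Nat.factorial_succ]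
      push_cast
      ring
    rw [hconst, zero_add, zero_add]
    exact hasLogMean_vonMangoldtProduct_one_succ l
  | succ i ih =>
    have hmain := (ih l).logMul.add (hasLogMean_incrementMul_vonMangoldt ih l)
    have herr := summatory_incrementMul_nonprimeVonMangoldt_isLittleO (fun s => (ih s).isBigO) l
    rw [sum_range_choose_mul_factorial] at hmain
    convert HasLogMean.vonMangoldtProduct_succ (ih l).isBigO hmain herr using 1
    · rw [show i + 1 + l = i + l + 1 by omega, Nat.factorial_succ]
      push_cast
      ring
    · omega

lemma vonMangoldtProduct_mean_div_factorial (i l : ℕ) :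
    ((i : ℝ) + 1) * (l + 1) * (i + l).factorial / (i + l + 1).factorial
      = ((i + 1 : ℕ) : ℝ) * (l + 1 : ℕ) / ((i + 1 : ℕ) + (l + 1 : ℕ) - 1) := by
  have hden : ((i + 1 : ℕ) : ℝ) + (l + 1 : ℕ) - 1 = i + l + 1 := by
    push_cast
    ring
  rw [hden, Nat.factorial_succ]
  push_cast
  field_simp

end Recursion

/-- `(1/X) Σ_{n ≤ X} Λ_j(n) Λ_k(n) ∼ (jk/(j+k−1)) (log X)^{j+k−1}` as `X → ∞`. -/
theorem covariance_of_vonMangoldt_integers (j k : ℕ) (hj : 1 ≤ j) (hk : 1 ≤ k) :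
    Tendsto
      (fun X : ℝ =>
        (∑ n ∈ Finset.Icc 1 ⌊X⌋₊, vmJ j n * vmJ k n) / (X * Real.log X ^ (j + k - 1)))
      atTop
      (nhds ((j : ℝ) * (k : ℝ) / ((j : ℝ) + (k : ℝ) - 1))) := by
  obtain ⟨i, rfl⟩ := Nat.exists_eq_add_of_le' hj
  obtain ⟨l, rfl⟩ := Nat.exists_eq_add_of_le' hk
  rw [← vonMangoldtProduct_mean_div_factorial]
  refine (hasLogMean_vonMangoldtProduct i l).tendsto_summatory_natFloor_div.congr fun X => ?_
  rw [summatory_apply, ← Finset.Icc_add_one_left_eq_Ioc, zero_add,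
    show i + 1 + (l + 1) - 1 = i + l + 1 by omega]
  simp only [vonMangoldtProduct_apply, higherVonMangoldt_apply]
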